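/- arXiv:2512.18121 — 5 statements merged into one kernel-verified Lean document; each statement's English description precedes it below -/
import Mathlib

section
/- For every real number x with |x| ≤ 1, Σ_{n=1}^∞ binom(2n,n)/(n²·4^n) · x^n = 2·Li₂((1−√(1−x))/2) − log²((1+√(1−x))/2), where √ denotes the principal square root. -/
/-!
Put `z = (1 - √(1 - x)) / 2`, so that `x = 4z(1 - z)`; the range `-1 ≤ x ≤ 1` corresponds to
`(1 - √2)/2 ≤ z ≤ 1/2`, and `√(1 - x) = 1 - 2z`. With `F` the left-hand series, the claim is
`F(4z(1 - z)) = 2 Li₂(z) - log²(1 - z)`.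

Write `c n = binom(2n,n)/4^n`. The binomial series gives `∑ c n xⁿ = 1/√(1 - x) = 1/(1 - 2z)`
(`hasSum_cb`). Integrating `∑ c (n+1) xⁿ` termwise and comparing derivatives in `z` gives
`∑ c (n+1)/(n+1) x^(n+1) = -2 log(1 - z)` (`prim_cb_eq`). A second termwise integration shows that
both sides of the claim have the same derivative in `z` on the open interval (`hasDerivAt_diff`).
Both sides are continuous up to the endpoints, because their coefficients are `O(1/n²)`, and they
vanish at `z = 0`, so they agree on the closed interval.
-/

/-- Dilogarithm `Li₂(z) = ∑_{n=1}^∞ z^n/n²`. -/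
noncomputable def Li2 (z : ℝ) : ℝ := ∑' n : ℕ, z ^ (n + 1) / ((n : ℝ) + 1) ^ 2

open Set

/-- The power series with coefficients `b`. -/
noncomputable def pser (b : ℕ → ℝ) (x : ℝ) : ℝ := ∑' n : ℕ, b n * x ^ n

/-- The termwise primitive of `pser b` that vanishes at `0`. -/
noncomputable def prim (b : ℕ → ℝ) (x : ℝ) : ℝ := ∑' n : ℕ, b n / ((n : ℝ) + 1) * x ^ (n + 1)

/-- The normalised central binomial coefficient `binom(2n,n) / 4^n`. -/
noncomputable def cb (n : ℕ) : ℝ := (n.centralBinom : ℝ) / 4 ^ n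

/-! ### Power series with bounded coefficients -/

lemma hasDerivAt_prim {b : ℕ → ℝ} (hb : ∀ n, |b n| ≤ 1) {x : ℝ} (hx : |x| < 1) :
    HasDerivAt (prim b) (pser b x) x := by
  obtain ⟨r, hxr, hr1⟩ := exists_between hx
  have hr0 : 0 ≤ r := (abs_nonneg x).trans hxr.le
  have hball : ∀ y : ℝ, y ∈ Metric.ball (0 : ℝ) r ↔ |y| < r := by simp
  refine hasDerivAt_tsum_of_isPreconnected (u := fun n => r ^ n) (t := Metric.ball 0 r) (y₀ := 0)
    (g := fun (n : ℕ) (y : ℝ) => b n / ((n : ℝ) + 1) * y ^ (n + 1))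
    (g' := fun (n : ℕ) (y : ℝ) => b n * y ^ n)
    (summable_geometric_of_lt_one hr0 hr1) Metric.isOpen_ball
    (convex_ball (0 : ℝ) r).isPreconnected ?_ ?_ ?_ ?_ ?_
  · intro n y _
    have h := (hasDerivAt_pow (n + 1) y).const_mul (b n / ((n : ℝ) + 1))
    have hn : (n : ℝ) + 1 ≠ 0 := by positivity
    refine h.congr_deriv ?_
    rw [← mul_assoc, Nat.cast_succ, div_mul_cancel₀ _ hn, Nat.add_sub_cancel]
  · intro n y hy
    rw [hball] at hy
    rw [Real.norm_eq_abs, abs_mul, abs_pow]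
    calc |b n| * |y| ^ n ≤ 1 * r ^ n := by gcongr; exact hb n
      _ = r ^ n := one_mul _
  · rw [hball]; simpa using (abs_nonneg x).trans_lt hxr
  · simp [summable_zero]
  · rwa [hball]

lemma prim_eq_mul_pser (b : ℕ → ℝ) (x : ℝ) :
    prim b x = x * pser (fun n => b n / ((n : ℝ) + 1)) x := by
  rw [prim, pser, ← tsum_mul_left]
  congr 1; ext n; ring

@[simp] lemma prim_zero (b : ℕ → ℝ) : prim b 0 = 0 := by simp [prim]

lemma pser_zero (b : ℕ → ℝ) : pser b 0 = b 0 := by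
  rw [pser, tsum_eq_single 0]
  · simp
  · intro n hn; simp [hn]

lemma abs_div_succ_le_one {b : ℕ → ℝ} (hb : ∀ n, |b n| ≤ 1) (n : ℕ) :
    |b n / ((n : ℝ) + 1)| ≤ 1 := by
  have : (0 : ℝ) < (n : ℝ) + 1 := by positivity
  rw [abs_div, abs_of_pos this, div_le_one this]
  have := hb n
  have : (0 : ℝ) ≤ n := by positivity
  linarith

/-- A double primitive has coefficients `O(1/n²)`, hence extends continuously to `[-1, 1]`. -/
lemma continuousOn_prim_div {b : ℕ → ℝ} (hb : ∀ n, |b n| ≤ 1) :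
    ContinuousOn (prim (fun n => b n / ((n : ℝ) + 1))) (Icc (-1) 1) := by
  have hs : Summable fun n : ℕ => 1 / ((n : ℝ) + 1) ^ 2 := by
    have := (summable_nat_add_iff 1).2 (Real.summable_one_div_nat_pow.2 one_lt_two)
    simpa using this
  refine continuousOn_tsum (fun n => by fun_prop) hs ?_
  intro n y hy
  have hy1 : |y| ≤ 1 := abs_le.2 hy
  have h1 : (0 : ℝ) < (n : ℝ) + 1 := by positivity
  rw [div_div, ← sq, Real.norm_eq_abs, abs_mul, abs_pow, abs_div,
    abs_of_pos (show (0 : ℝ) < ((n : ℝ) + 1) ^ 2 by positivity)]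
  calc |b n| / ((n : ℝ) + 1) ^ 2 * |y| ^ (n + 1) ≤ 1 / ((n : ℝ) + 1) ^ 2 * 1 := by
        gcongr
        · exact hb n
        · exact pow_le_one₀ (abs_nonneg y) hy1
    _ = _ := mul_one _

lemma prim_one {z : ℝ} (hz : |z| < 1) : prim (fun _ => 1) z = -Real.log (1 - z) := by
  rw [← (Real.hasSum_pow_div_log_of_abs_lt_one hz).tsum_eq, prim]
  congr 1; ext n; ring

lemma Li2_eq_prim (z : ℝ) : Li2 z = prim (fun n => 1 / ((n : ℝ) + 1)) z := by
  rw [Li2, prim]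
  congr 1; ext n
  have : (n : ℝ) + 1 ≠ 0 := by positivity
  field_simp

/-! ### The central binomial series -/

lemma cb_nonneg (n : ℕ) : 0 ≤ cb n := by unfold cb; positivity

lemma abs_cb_le (n : ℕ) : |cb n| ≤ 1 := by
  rw [abs_of_nonneg (cb_nonneg n), cb, div_le_one (by positivity)]
  exact_mod_cast Nat.centralBinom_le_four_pow n

lemma cb_one : cb 1 = 1 / 2 := by norm_num [cb, Nat.centralBinom, Nat.choose]

lemma succ_mul_cb_succ (n : ℕ) : ((n : ℝ) + 1) * cb (n + 1) = (n + 1 / 2) * cb n := by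
  have h : ((n : ℝ) + 1) * (n + 1).centralBinom = 2 * (2 * n + 1) * n.centralBinom := by
    exact_mod_cast Nat.succ_mul_centralBinom_succ n
  rw [cb, cb, ← mul_div_assoc, h]
  field_simp
  ring

lemma succ_mul_choose_succ (a : ℝ) (n : ℕ) :
    ((n : ℝ) + 1) * Ring.choose a (n + 1) = (a - n) * Ring.choose a n := by
  have h1 := Ring.descPochhammer_eq_factorial_smul_choose a n
  have h2 := Ring.descPochhammer_eq_factorial_smul_choose a (n + 1)
  rw [descPochhammer_succ_right, Polynomial.smeval_mul, h1] at h2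
  simp [Polynomial.smeval_sub, Polynomial.smeval_natCast, Nat.factorial_succ] at h2
  have : (n.factorial : ℝ) ≠ 0 := by positivity
  apply mul_left_cancel₀ this
  linear_combination -h2

lemma choose_neg_half (n : ℕ) : Ring.choose (-1 / 2 : ℝ) n = (-1) ^ n * cb n := by
  induction n with
  | zero => simp [cb]
  | succ n ih =>
    have h1 := succ_mul_choose_succ (-1 / 2) n
    have h2 := succ_mul_cb_succ n
    have : (n : ℝ) + 1 ≠ 0 := by positivity
    apply mul_left_cancel₀ this
    rw [h1, ih]
    linear_combination (-1) ^ n * h2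

lemma hasSum_cb {x : ℝ} (hx : |x| < 1) :
    HasSum (fun n => cb n * x ^ n) (1 / Real.sqrt (1 - x)) := by
  have h := (Real.one_add_rpow_hasFPowerSeriesOnBall_zero (a := -1 / 2)).hasSum (y := -x)
    (by simpa [enorm_eq_nnnorm, ← NNReal.coe_lt_coe] using hx)
  have h1 : 0 ≤ 1 - x := by linarith [(abs_lt.1 hx).2]
  convert! h using 1
  · ext n
    rw [binomialSeries_apply, choose_neg_half]
    simp only [List.ofFn_const, List.prod_replicate, smul_eq_mul]
    rw [neg_pow x n]
    have : ((-1 : ℝ) ^ n) * (-1) ^ n = 1 := by rw [← mul_pow]; simp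
    linear_combination (-(cb n * x ^ n)) * this
  · rw [zero_add, ← sub_eq_add_neg, Real.sqrt_eq_rpow, neg_div, Real.rpow_neg h1, one_div]

lemma mul_pser_cb_succ {x : ℝ} (hx : |x| < 1) :
    x * pser (fun n => cb (n + 1)) x = 1 / Real.sqrt (1 - x) - 1 := by
  have h := hasSum_cb hx
  rw [← h.tsum_eq, h.summable.tsum_eq_zero_add, pser, ← tsum_mul_left]
  simp [cb]
  congr 1; ext n; ring

/-! ### The substitution `x = 4z(1 - z)` -/

/-- The left endpoint of the `z`-interval, where `4z(1 - z) = -1`. -/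
noncomputable def zmin : ℝ := (1 - Real.sqrt 2) / 2

lemma zmin_bounds : -1 / 2 < zmin ∧ zmin < 0 := by
  have h0 := Real.sqrt_nonneg 2
  have h2 := Real.sq_sqrt (show (0 : ℝ) ≤ 2 by norm_num)
  unfold zmin
  constructor <;> nlinarith

lemma mapsTo_Icc {z : ℝ} (hz : z ∈ Icc zmin (1 / 2)) : 4 * z * (1 - z) ∈ Icc (-1 : ℝ) 1 := by
  have h2 := Real.sq_sqrt (show (0 : ℝ) ≤ 2 by norm_num)
  have h3 : (1 - 2 * z) ≤ Real.sqrt 2 := by have := hz.1; unfold zmin at this; linarith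
  have h4 : 0 ≤ 1 - 2 * z := by linarith [hz.2]
  constructor <;> nlinarith

lemma abs_lt_of_mem_Ioo {z : ℝ} (hz : z ∈ Ioo zmin (1 / 2)) : |4 * z * (1 - z)| < 1 := by
  have h2 := Real.sq_sqrt (show (0 : ℝ) ≤ 2 by norm_num)
  have h3 : (1 - 2 * z) < Real.sqrt 2 := by have := hz.1; unfold zmin at this; linarith
  have h4 : 0 < 1 - 2 * z := by linarith [hz.2]
  rw [abs_lt]
  constructor <;> nlinarith

lemma hasDerivAt_subst (z : ℝ) :
    HasDerivAt (fun z : ℝ => 4 * z * (1 - z)) (4 * (1 - 2 * z)) z := by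
  have h := ((hasDerivAt_id z).const_mul 4).mul ((hasDerivAt_id z).const_sub 1)
  refine (h.congr_deriv ?_)
  simp; ring

lemma sqrt_subst {z : ℝ} (hz : z ≤ 1 / 2) : Real.sqrt (1 - 4 * z * (1 - z)) = 1 - 2 * z := by
  rw [show 1 - 4 * z * (1 - z) = (1 - 2 * z) ^ 2 by ring, Real.sqrt_sq (by linarith)]

lemma hasDerivAt_log_one_sub {z : ℝ} (hz : z < 1) :
    HasDerivAt (fun z : ℝ => Real.log (1 - z)) (-1 / (1 - z)) z :=
  ((hasDerivAt_id z).const_sub 1).log (by simp; linarith)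

/-- `∑ binom(2n,n)/(n 4^n) x^n = -2 log((1 + √(1 - x))/2)`, in the variable `z`. -/
lemma prim_cb_eq {z : ℝ} (hz : z ∈ Ioo zmin (1 / 2)) :
    prim (fun n => cb (n + 1)) (4 * z * (1 - z)) = -2 * Real.log (1 - z) := by
  have hd : ∀ w ∈ Ioo zmin (1 / 2), HasDerivAt
      (fun w => prim (fun n => cb (n + 1)) (4 * w * (1 - w)) + 2 * Real.log (1 - w)) 0 w := by
    intro w hw
    have hw1 : 1 - w ≠ 0 := by linarith [hw.2]
    have hw2 : 1 - 2 * w ≠ 0 := by linarith [hw.2]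
    have h1 := (hasDerivAt_prim (fun n => abs_cb_le (n + 1)) (abs_lt_of_mem_Ioo hw)).comp w
      (hasDerivAt_subst w)
    have h2 := (hasDerivAt_log_one_sub (show w < 1 by linarith [hw.2])).const_mul 2
    refine (h1.add h2).congr_deriv ?_
    -- The series value is `(1/(1 - 2w) - 1)/x` away from `x = 0`; at `w = 0` it is `c 1 = 1/2`.
    rcases eq_or_ne w 0 with rfl | hw0
    · norm_num [pser_zero, cb_one]
    · have h3 := mul_pser_cb_succ (abs_lt_of_mem_Ioo hw)
      rw [sqrt_subst hw.2.le] at h3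
      have h4 : pser (fun n => cb (n + 1)) (4 * w * (1 - w))
          = (1 / (1 - 2 * w) - 1) / (4 * w * (1 - w)) := by
        rw [eq_div_iff (by positivity), mul_comm, h3]
      rw [h4]
      field_simp
      ring
  have h := isOpen_Ioo.is_const_of_deriv_eq_zero isPreconnected_Ioo
    (fun w hw => (hd w hw).differentiableAt.differentiableWithinAt)
    (fun w hw => (hd w hw).deriv) hz
    (show (0 : ℝ) ∈ Ioo zmin (1 / 2) from ⟨zmin_bounds.2, by norm_num⟩)
  simp at h
  linarith

/-- The left-hand side of the identity minus its right-hand side, in the variable `z`. -/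
noncomputable def diffFun (z : ℝ) : ℝ :=
  prim (fun n => cb (n + 1) / ((n : ℝ) + 1)) (4 * z * (1 - z))
    - 2 * prim (fun n => 1 / ((n : ℝ) + 1)) z + Real.log (1 - z) ^ 2

lemma hasDerivAt_diff {z : ℝ} (hz : z ∈ Ioo zmin (1 / 2)) : HasDerivAt diffFun 0 z := by
  have hz1 : 1 - z ≠ 0 := by linarith [hz.2]
  have hza : |z| < 1 := by
    rw [abs_lt]; constructor <;> linarith [hz.1, hz.2, zmin_bounds.1]
  have h1 := (hasDerivAt_prim (abs_div_succ_le_one (fun n => abs_cb_le (n + 1)))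
    (abs_lt_of_mem_Ioo hz)).comp z (hasDerivAt_subst z)
  have h2 := (hasDerivAt_prim (abs_div_succ_le_one (b := fun _ => 1) (by simp)) hza).const_mul 2
  have h3 := (hasDerivAt_log_one_sub (show z < 1 by linarith [hz.2])).pow 2
  refine ((h1.sub h2).add h3).congr_deriv ?_
  -- At `z = 0` the derivatives are read off from the leading coefficients.
  rcases eq_or_ne z 0 with rfl | hz0
  · norm_num [pser_zero, cb_one]
  · have e1 := prim_cb_eq hz
    rw [prim_eq_mul_pser, mul_comm, ← eq_div_iff (by positivity)] at e1
    have e2 := prim_one hza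
    rw [prim_eq_mul_pser, mul_comm, ← eq_div_iff hz0] at e2
    rw [e1, e2]
    field_simp
    ring

lemma continuousOn_diff : ContinuousOn diffFun (Icc zmin (1 / 2)) := by
  have hb := zmin_bounds.1
  refine ContinuousOn.add (ContinuousOn.sub ?_ (ContinuousOn.mul continuousOn_const ?_)) ?_
  · exact (continuousOn_prim_div (fun n => abs_cb_le (n + 1))).comp (by fun_prop)
      (fun z hz => mapsTo_Icc hz)
  · exact (continuousOn_prim_div (b := fun _ => 1) (by simp)).mono
      (Icc_subset_Icc (by linarith) (by norm_num))
  · exact (ContinuousOn.log (by fun_prop) (fun z hz => by linarith [hz.2])).pow 2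

lemma diffFun_eq_zero {z : ℝ} (hz : z ∈ Icc zmin (1 / 2)) : diffFun z = 0 := by
  have key : ∀ u v, u < v → u ∈ Icc zmin (1 / 2) → v ∈ Icc zmin (1 / 2) →
      diffFun v = diffFun u := by
    intro u v huv hu hv
    obtain ⟨w, -, hw⟩ := exists_hasDerivAt_eq_slope diffFun (fun _ => 0) huv
      (continuousOn_diff.mono (Icc_subset_Icc hu.1 hv.2))
      (fun w hw => hasDerivAt_diff ⟨hu.1.trans_lt hw.1, hw.2.trans_le hv.2⟩)
    rw [eq_div_iff (by linarith)] at hw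
    linarith
  have h0 : diffFun 0 = 0 := by simp [diffFun]
  have hmem : (0 : ℝ) ∈ Icc zmin (1 / 2) := ⟨zmin_bounds.2.le, by norm_num⟩
  rcases lt_trichotomy z 0 with h | rfl | h
  · rw [← key z 0 h hz hmem, h0]
  · exact h0
  · rw [key 0 z h hmem hz, h0]

theorem stmt4 (x : ℝ) (hx : |x| ≤ 1) :
    ∑' n : ℕ, (Nat.choose (2 * (n + 1)) (n + 1) : ℝ) /
        (((n : ℝ) + 1) ^ 2 * 4 ^ (n + 1)) * x ^ (n + 1)
      = 2 * Li2 ((1 - Real.sqrt (1 - x)) / 2)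
        - (Real.log ((1 + Real.sqrt (1 - x)) / 2)) ^ 2 := by
  obtain ⟨hx1, hx2⟩ := abs_le.1 hx
  have hs := Real.sq_sqrt (show 0 ≤ 1 - x by linarith)
  have hs0 := Real.sqrt_nonneg (1 - x)
  have hs2 : Real.sqrt (1 - x) ≤ Real.sqrt 2 := Real.sqrt_le_sqrt (by linarith)
  have h := diffFun_eq_zero (z := (1 - Real.sqrt (1 - x)) / 2)
    ⟨by unfold zmin; linarith, by linarith⟩
  have hL : ∑' n : ℕ, (Nat.choose (2 * (n + 1)) (n + 1) : ℝ) /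
        (((n : ℝ) + 1) ^ 2 * 4 ^ (n + 1)) * x ^ (n + 1)
      = prim (fun n => cb (n + 1) / ((n : ℝ) + 1)) x := by
    rw [prim]
    congr 1; ext n
    rw [cb, Nat.centralBinom_eq_two_mul_choose, div_div, div_div]
    congr 2
    ring
  rw [diffFun, ← Li2_eq_prim,
    show 4 * ((1 - Real.sqrt (1 - x)) / 2) * (1 - (1 - Real.sqrt (1 - x)) / 2) = x by
      linear_combination -hs,
    show 1 - (1 - Real.sqrt (1 - x)) / 2 = (1 + Real.sqrt (1 - x)) / 2 by ring] at h
  rw [hL]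
  linarith
end

section
/- For every complex number a with a ∉ {0,−1,−2,...}, Σ_{n=0}^∞ binom(2n,n)/((n+a)·4^n) = Γ(a)²·4^a/(2·Γ(2a)), where Γ is the Gamma function. -/
/-!
Write `c n = binom(2n,n) / 4 ^ n`, so that `(n + 1) c (n+1) = (n + 1/2) c n`, and let `S a` be the
sum `∑ c n / (n + a)`.

If `0 < re a`, integrate the binomial series `∑ c n x ^ n = (1 - x) ^ (-1/2)` against `x ^ (a - 1)`
over `(0, 1)`: since `∫ x ^ (n + a - 1) = 1 / (n + a)`, this gives
`S a = Β(a, 1/2) = Γ(a) Γ(1/2) / Γ(a + 1/2)`, which Legendre's duplication formula turns into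
`Γ(a)² 4 ^ a / (2 Γ(2a))` (`tsum_of_re_pos`). Summation and integration may be exchanged because
`∑ c n / (n + re a)` converges, by comparison with the telescoping series
`∑ c n / (2n + 2) = ∑ (c n - c (n+1))`.

For the other `a`, both sides satisfy `a f(a) = (a + 1/2) f(a + 1)`. For the series this is again a
telescoping argument (`tsum_recurrence`), using `c n → 0`; for the right-hand side it is the
functional equation of `Γ` (`rhs_recurrence`). As `a` is not a nonpositive integer, the identity
descends from `a + 1` to `a`, hence from the half plane `0 < re a` to all admissible `a`.
-/

open Filter Topology MeasureTheory Set

namespace CentralBinomSeries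

/-- The normalized central binomial coefficient `binom(2n,n) / 4 ^ n`. -/
noncomputable def c (n : ℕ) : ℝ := (Nat.centralBinom n : ℝ) / 4 ^ n

lemma c_zero : c 0 = 1 := by simp [c]

lemma c_pos (n : ℕ) : 0 < c n := by
  have := Nat.centralBinom_pos n
  unfold c
  positivity

lemma c_succ (n : ℕ) : ((n : ℝ) + 1) * c (n + 1) = (n + 1 / 2) * c n := by
  have h : ((n : ℝ) + 1) * (Nat.centralBinom (n + 1) : ℝ)
      = 2 * (2 * n + 1) * Nat.centralBinom n := by
    exact_mod_cast Nat.succ_mul_centralBinom_succ n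
  unfold c
  rw [← mul_div_assoc, h, pow_succ]
  field_simp
  ring

lemma c_succ_complex (n : ℕ) : ((n : ℂ) + 1) * (c (n + 1) : ℂ) = (n + 1 / 2) * (c n : ℂ) := by
  have h := congrArg (fun x : ℝ => (x : ℂ)) (c_succ n)
  push_cast at h
  exact h

lemma c_sub_c_succ (n : ℕ) : c n - c (n + 1) = c n / (n + 1) / 2 := by
  have h := c_succ n
  field_simp
  linarith

lemma summable_c_div : Summable fun n : ℕ => c n / ((n : ℝ) + 1) := by
  refine summable_of_sum_range_le (c := 2) (fun n => ?_) (fun n => ?_)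
  · have := c_pos n
    positivity
  · have h : ∑ i ∈ Finset.range n, c i / ((i : ℝ) + 1)
        = 2 * ∑ i ∈ Finset.range n, (c i - c (i + 1)) := by
      rw [Finset.mul_sum]
      refine Finset.sum_congr rfl fun i _ => ?_
      rw [c_sub_c_succ]
      ring
    rw [h, Finset.sum_range_sub', c_zero]
    linarith [c_pos n]

lemma c_sq_le (n : ℕ) : c n ^ 2 * (2 * n + 1) ≤ 1 := by
  induction n with
  | zero => simp [c_zero]
  | succ n ih =>
    have h : c (n + 1) = (n + 1 / 2) / (n + 1) * c n := by
      have := c_succ n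
      field_simp at this ⊢
      linarith
    refine le_trans ?_ ih
    rw [h, mul_pow, mul_comm (_ ^ 2) (c n ^ 2), mul_assoc]
    refine mul_le_mul_of_nonneg_left ?_ (sq_nonneg _)
    rw [div_pow, div_mul_eq_mul_div, div_le_iff₀ (by positivity)]
    push_cast
    nlinarith [(Nat.cast_nonneg n : (0 : ℝ) ≤ n)]

lemma tendsto_c : Tendsto c atTop (𝓝 0) := by
  have h : Tendsto (fun n => c n ^ 2) atTop (𝓝 0) := by
    refine squeeze_zero (fun n => sq_nonneg _) (fun n => ?_)
      tendsto_one_div_add_atTop_nhds_zero_nat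
    rw [le_div_iff₀ (by positivity)]
    refine le_trans ?_ (c_sq_le n)
    refine mul_le_mul_of_nonneg_left ?_ (sq_nonneg _)
    linarith [(Nat.cast_nonneg n : (0 : ℝ) ≤ n)]
  have h2 := h.sqrt
  simpa [Real.sqrt_sq (c_pos _).le] using h2

lemma half_le_norm_add (a : ℂ) : ∀ᶠ n : ℕ in atTop, ((n : ℝ) + 1) / 2 ≤ ‖(n : ℂ) + a‖ := by
  filter_upwards [eventually_ge_atTop ⌈2 * ‖a‖ + 1⌉₊] with n hn
  have h1 : 2 * ‖a‖ + 1 ≤ n := Nat.ceil_le.mp hn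
  have h2 := norm_sub_le_norm_add (n : ℂ) a
  simp only [Complex.norm_natCast] at h2
  linarith

lemma summable_term (a : ℂ) : Summable fun n : ℕ => (c n : ℂ) / ((n : ℂ) + a) := by
  refine Summable.of_norm_bounded_eventually_nat (summable_c_div.mul_left 2) ?_
  filter_upwards [half_le_norm_add a] with n hn
  have hc := c_pos n
  have hp : (0 : ℝ) < ((n : ℝ) + 1) / 2 := by positivity
  rw [norm_div, Complex.norm_real, Real.norm_of_nonneg hc.le]
  calc c n / ‖(n : ℂ) + a‖ ≤ c n / (((n : ℝ) + 1) / 2) := by gcongr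
    _ = 2 * (c n / (n + 1)) := by field_simp

lemma tendsto_boundary (a : ℂ) :
    Tendsto (fun n : ℕ => (n : ℂ) * (c n : ℂ) / ((n : ℂ) + a)) atTop (𝓝 0) := by
  refine squeeze_zero_norm' (a := fun n => 2 * c n) ?_ (by simpa using tendsto_c.const_mul 2)
  filter_upwards [half_le_norm_add a] with n hn
  have hc := c_pos n
  have hp : (0 : ℝ) < ((n : ℝ) + 1) / 2 := by positivity
  rw [norm_div, norm_mul, Complex.norm_real, Real.norm_of_nonneg hc.le, Complex.norm_natCast,
    div_le_iff₀ (hp.trans_le hn)]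
  nlinarith

/-- The difference of the two sides is the sum of `g (n+1) - g n` with `g n = n c n / (n + a)`,
where `g 0 = 0` and `g` tends to `0`. -/
lemma tsum_recurrence (a : ℂ) (ha : ∀ m : ℕ, a ≠ -(m : ℂ)) :
    a * ∑' n : ℕ, (c n : ℂ) / ((n : ℂ) + a)
      = (a + 1 / 2) * ∑' n : ℕ, (c n : ℂ) / ((n : ℂ) + (a + 1)) := by
  have hne : ∀ n : ℕ, (n : ℂ) + a ≠ 0 := fun n h => ha n (by linear_combination h)
  have hs := ((summable_term a).hasSum.mul_left a).sub
    ((summable_term (a + 1)).hasSum.mul_left (a + 1 / 2))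
  have ht : ∀ n : ℕ, a * ((c n : ℂ) / ((n : ℂ) + a))
        - (a + 1 / 2) * ((c n : ℂ) / ((n : ℂ) + (a + 1)))
      = ((n + 1 : ℕ) : ℂ) * (c (n + 1) : ℂ) / (((n + 1 : ℕ) : ℂ) + a)
        - (n : ℂ) * (c n : ℂ) / ((n : ℂ) + a) := by
    intro n
    have h1 := hne n
    have h2 := hne (n + 1)
    push_cast at h2 ⊢
    rw [c_succ_complex, show (n : ℂ) + (a + 1) = n + 1 + a by ring]
    field_simp
    ring
  have hl := hs.tendsto_sum_nat
  simp only [ht] at hl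
  simp only [Finset.sum_range_sub (fun n : ℕ => (n : ℂ) * (c n : ℂ) / ((n : ℂ) + a))] at hl
  have h0 := tendsto_nhds_unique hl ((tendsto_boundary a).sub_const _)
  simp only [Nat.cast_zero, zero_mul, zero_div, sub_zero] at h0
  exact sub_eq_zero.mp h0

/-- No nonvanishing hypothesis on `Γ(2a)` is needed, since `1 / Γ` satisfies its functional
equation everywhere. -/
lemma rhs_recurrence (a : ℂ) (ha : a ≠ 0) :
    a * (Complex.Gamma a ^ 2 * (4 : ℂ) ^ a / (2 * Complex.Gamma (2 * a)))
      = (a + 1 / 2) * (Complex.Gamma (a + 1) ^ 2 * (4 : ℂ) ^ (a + 1)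
          / (2 * Complex.Gamma (2 * (a + 1)))) := by
  have h1 := Complex.one_div_Gamma_eq_self_mul_one_div_Gamma_add_one (2 * a)
  have h2 := Complex.one_div_Gamma_eq_self_mul_one_div_Gamma_add_one (2 * a + 1)
  rw [show 2 * a + 1 + 1 = 2 * (a + 1) by ring] at h2
  rw [h2] at h1
  rw [Complex.Gamma_add_one a ha, Complex.cpow_add _ _ (by norm_num), Complex.cpow_one,
    div_eq_mul_inv (Complex.Gamma a ^ 2 * (4 : ℂ) ^ a), mul_inv, h1]
  ring

lemma choose_half (n : ℕ) : Ring.choose ((1 / 2 : ℂ) + n - 1) n = (c n : ℂ) := by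
  have hf : ∀ n : ℕ, (n.factorial : ℂ) * Ring.choose ((1 / 2 : ℂ) + n - 1) n
      = (ascPochhammer ℂ n).eval (1 / 2) := by
    intro n
    have := Ring.factorial_nsmul_multichoose_eq_ascPochhammer (1 / 2 : ℂ) n
    rw [nsmul_eq_mul] at this
    rw [Ring.choose, show (1 / 2 : ℂ) + n - 1 - n + 1 = 1 / 2 by ring, this,
      Polynomial.ascPochhammer_smeval_eq_eval]
  have hc : ∀ n : ℕ, (n.factorial : ℂ) * (c n : ℂ) = (ascPochhammer ℂ n).eval (1 / 2) := by
    intro n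
    induction n with
    | zero => simp [c_zero]
    | succ n ih =>
      rw [ascPochhammer_succ_eval, ← ih, Nat.factorial_succ]
      push_cast
      linear_combination (n.factorial : ℂ) * c_succ_complex n
  have h0 : (n.factorial : ℂ) ≠ 0 := by exact_mod_cast n.factorial_ne_zero
  exact mul_left_cancel₀ h0 ((hf n).trans (hc n).symm)

lemma hasSum_binomial {x : ℝ} (h0 : 0 < x) (h1 : x < 1) :
    HasSum (fun n : ℕ => (c n : ℂ) * (x : ℂ) ^ n) ((1 - (x : ℂ)) ^ ((1 / 2 : ℂ) - 1)) := by
  have h := (Complex.one_div_one_sub_cpow_hasFPowerSeriesOnBall_zero (1 / 2)).hasSum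
    (y := (x : ℂ)) (by
      simp only [Metric.mem_eball, edist_zero_right]
      rw [← ofReal_norm, Complex.norm_real, Real.norm_of_nonneg h0.le]
      simpa using h1)
  simp only [FormalMultilinearSeries.ofScalars_apply_eq, choose_half, smul_eq_mul, zero_add] at h
  rwa [one_div, ← Complex.cpow_neg, show -(1 / 2 : ℂ) = 1 / 2 - 1 by norm_num] at h

lemma integral_Ioo_cpow (n : ℕ) {a : ℂ} (ha : 0 < a.re) :
    ∫ x in Ioo (0 : ℝ) 1, (c n : ℂ) * (x : ℂ) ^ ((n : ℂ) + a - 1) = (c n : ℂ) / ((n : ℂ) + a) := by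
  have hre : 0 < ((n : ℂ) + a).re := by simp; positivity
  have hne : (n : ℂ) + a ≠ 0 := fun h => by simp [h] at hre
  rw [integral_const_mul, ← integral_Ioc_eq_integral_Ioo,
    ← intervalIntegral.integral_of_le zero_le_one,
    integral_cpow (Or.inl (by rw [Complex.sub_re, Complex.one_re]; linarith))]
  simp [hne, div_eq_mul_inv]

lemma integral_Ioo_norm (n : ℕ) {a : ℂ} (ha : 0 < a.re) :
    ∫ x in Ioo (0 : ℝ) 1, ‖(c n : ℂ) * (x : ℂ) ^ ((n : ℂ) + a - 1)‖ = c n / (n + a.re) := by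
  have hpos : 0 < (n : ℝ) + a.re := by positivity
  have h : ∀ x ∈ Ioo (0 : ℝ) 1, ‖(c n : ℂ) * (x : ℂ) ^ ((n : ℂ) + a - 1)‖
      = c n * x ^ ((n : ℝ) + a.re - 1) := by
    intro x hx
    rw [norm_mul, Complex.norm_real, Real.norm_of_nonneg (c_pos n).le,
      Complex.norm_cpow_eq_rpow_re_of_pos hx.1]
    simp
  rw [setIntegral_congr_fun measurableSet_Ioo h, integral_const_mul,
    ← integral_Ioc_eq_integral_Ioo, ← intervalIntegral.integral_of_le zero_le_one,
    integral_rpow (Or.inl (by linarith))]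
  simp [hpos.ne', div_eq_mul_inv]

lemma tsum_eq_betaIntegral {a : ℂ} (ha : 0 < a.re) :
    ∑' n : ℕ, (c n : ℂ) / ((n : ℂ) + a) = Complex.betaIntegral a (1 / 2) := by
  have hsum : Summable fun n : ℕ => c n / ((n : ℝ) + a.re) := by
    have h := summable_term (a.re : ℂ)
    exact_mod_cast h
  have key := hasSum_integral_of_summable_integral_norm
    (μ := volume.restrict (Ioo (0 : ℝ) 1))
    (F := fun (n : ℕ) (x : ℝ) => (c n : ℂ) * (x : ℂ) ^ ((n : ℂ) + a - 1))
    (fun n => by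
      refine Integrable.const_mul ?_ _
      refine (intervalIntegral.integrableOn_Ioo_cpow_iff zero_lt_one).mpr ?_
      have : 0 < (n : ℝ) + a.re := by positivity
      simp
      linarith)
    (by simpa only [integral_Ioo_norm _ ha] using hsum)
  simp only [integral_Ioo_cpow _ ha] at key
  rw [key.tsum_eq, Complex.betaIntegral, intervalIntegral.integral_of_le zero_le_one,
    integral_Ioc_eq_integral_Ioo]
  refine setIntegral_congr_fun measurableSet_Ioo fun x hx => ?_
  have hx0 : (x : ℂ) ≠ 0 := by exact_mod_cast hx.1.ne'
  have h := (hasSum_binomial hx.1 hx.2).mul_left ((x : ℂ) ^ (a - 1))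
  refine Eq.trans (tsum_congr fun n => ?_) h.tsum_eq
  rw [add_sub_assoc, Complex.cpow_add _ _ hx0, Complex.cpow_natCast]
  ring

lemma tsum_of_re_pos {a : ℂ} (ha : 0 < a.re) :
    ∑' n : ℕ, (c n : ℂ) / ((n : ℂ) + a)
      = Complex.Gamma a ^ 2 * (4 : ℂ) ^ a / (2 * Complex.Gamma (2 * a)) := by
  rw [tsum_eq_betaIntegral ha, Complex.betaIntegral_eq_Gamma_mul_div a (1 / 2) ha (by simp)]
  have h1 : Complex.Gamma (a + 1 / 2) ≠ 0 :=
    Complex.Gamma_ne_zero_of_re_pos (by simp; positivity)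
  have h2 : Complex.Gamma (2 * a) ≠ 0 := Complex.Gamma_ne_zero_of_re_pos (by simpa using ha)
  have hd := Complex.Gamma_mul_Gamma_add_half a
  have hhalf : Complex.Gamma (1 / 2) = ((√Real.pi : ℝ) : ℂ) := by
    rw [← Real.Gamma_one_half_eq, ← Complex.Gamma_ofReal]
    norm_num
  have h4 : (4 : ℂ) ^ a * (2 : ℂ) ^ (1 - 2 * a) = 2 := by
    have h22 : (4 : ℂ) ^ a = (2 : ℂ) ^ a * (2 : ℂ) ^ a := by
      have := Complex.mul_cpow_ofReal_nonneg (a := 2) (b := 2) zero_le_two zero_le_two a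
      norm_num at this
      exact this
    rw [h22, ← Complex.cpow_add _ _ two_ne_zero, ← Complex.cpow_add _ _ two_ne_zero,
      show a + a + (1 - 2 * a) = 1 by ring, Complex.cpow_one]
  rw [hhalf, div_eq_div_iff h1 (mul_ne_zero two_ne_zero h2)]
  linear_combination (-(Complex.Gamma a) * (4 : ℂ) ^ a) * hd
    - Complex.Gamma a * Complex.Gamma (2 * a) * ((√Real.pi : ℝ) : ℂ) * h4

/-- Induction on the number `k` of unit shifts that bring `a` into the right half plane. -/
lemma tsum_of_shift (k : ℕ) : ∀ a : ℂ, (∀ m : ℕ, a ≠ -(m : ℂ)) → 0 < a.re + k →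
    ∑' n : ℕ, (c n : ℂ) / ((n : ℂ) + a)
      = Complex.Gamma a ^ 2 * (4 : ℂ) ^ a / (2 * Complex.Gamma (2 * a)) := by
  induction k with
  | zero => exact fun a _ h => tsum_of_re_pos (by simpa using h)
  | succ k ih =>
    intro a ha h
    have ha0 : a ≠ 0 := by simpa using ha 0
    have h1 := ih (a + 1)
      (fun m hm => ha (m + 1) (by push_cast; linear_combination hm))
      (by simp only [Complex.add_re, Complex.one_re]; push_cast at h; linarith)
    refine mul_left_cancel₀ ha0 ?_
    rw [tsum_recurrence a ha, h1, rhs_recurrence a ha0]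

end CentralBinomSeries

theorem stmt13 (a : ℂ) (ha : ∀ m : ℕ, a ≠ -(m : ℂ)) :
    ∑' n : ℕ, (Nat.choose (2 * n) n : ℂ) / (((n : ℂ) + a) * 4 ^ n)
      = Complex.Gamma a ^ 2 * (4 : ℂ) ^ a / (2 * Complex.Gamma (2 * a)) := by
  obtain ⟨k, hk⟩ := exists_nat_gt (-a.re)
  rw [← CentralBinomSeries.tsum_of_shift k a ha (by linarith)]
  refine tsum_congr fun n => ?_
  rw [CentralBinomSeries.c, Nat.centralBinom_eq_two_mul_choose]
  push_cast
  rw [div_div, mul_comm ((n : ℂ) + a)]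
end

section
/- Let m ≥ 2 be an integer and let x be a real number with |x| ≤ (m−1)^{m−1}/m^m. Then Σ_{n=1}^∞ binom(mn,n)·(−1)^n·x^n/n² = −m·Li₂(1−G_m(−x)) − (m²/2)·log²(G_m(−x)). -/
/-- Generating function of the Fuss–Catalan numbers:
`G_m(x) = ∑_{n=0}^∞ binom(mn,n)/((m-1)n+1) · xⁿ`. -/
noncomputable def FC (m : ℕ) (x : ℝ) : ℝ :=
  ∑' n : ℕ, (Nat.choose (m * n) n : ℝ) / (((m : ℝ) - 1) * n + 1) * x ^ n

namespace FussCatalan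

open PowerSeries

/-! ### Formal power series identities -/

/-- The series `∑ binom(a + mk, k) X^k`; for `G = 1 + X G^m` it equals `G^a · Q m 0`. -/
noncomputable def Q (m a : ℕ) : PowerSeries ℝ := mk fun k => ((a + m * k).choose k : ℝ)

/-- The series `∑ a/(a + mk) · binom(a + mk, k) X^k`, written without division by means of
`a/N · binom(N, k) = binom(N, k) - m · binom(N - 1, k - 1)` for `N = a + mk`. It is the `a`-th power
of the Fuss–Catalan series `P m 1`. The truncated index `a + m - 1` is genuine for `m ≥ 1`. -/
noncomputable def P (m a : ℕ) : PowerSeries ℝ :=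
  Q m a - C (m : ℝ) * (X * Q m (a + m - 1))

theorem Q_succ (m a : ℕ) : Q m (a + 1) = Q m a + X * Q m (a + m) := by
  ext k
  rcases k with _ | k
  · simp [Q]
  · rw [map_add, coeff_succ_X_mul]
    simp only [Q, coeff_mk]
    have h1 : a + 1 + m * (k + 1) = (a + m * (k + 1)) + 1 := by ring
    have h2 : a + m + m * k = a + m * (k + 1) := by ring
    rw [h1, h2, Nat.choose_succ_succ]
    push_cast; ring

theorem P_succ (m a : ℕ) (hm : 1 ≤ m) : P m (a + 1) = P m a + X * P m (a + m) := by
  have h1 : a + 1 + m - 1 = (a + m - 1) + 1 := by omega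
  have h2 : a + m + m - 1 = (a + m - 1) + m := by omega
  simp only [P]
  rw [h1, h2, Q_succ, Q_succ]
  ring

theorem P_zero (m : ℕ) (hm : 1 ≤ m) : P m 0 = 1 := by
  ext k
  rcases k with _ | k
  · simp [P, Q]
  · rw [P, map_sub, coeff_C_mul, coeff_succ_X_mul]
    simp only [Q, coeff_mk, coeff_one, Nat.succ_ne_zero, if_false]
    have h := Nat.add_one_mul_choose_eq (0 + m - 1 + m * k) k
    have h1 : 0 + m - 1 + m * k + 1 = 0 + m * (k + 1) := by
      rw [mul_add]; omega
    rw [h1] at h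
    have hcast : ((0 + m * (k + 1) : ℕ) : ℝ) * ((0 + m - 1 + m * k).choose k : ℝ)
      = ((0 + m * (k + 1)).choose (k + 1) : ℝ) * ((k + 1 : ℕ) : ℝ) := by exact_mod_cast h
    have hk : ((k : ℝ) + 1) ≠ 0 := by positivity
    apply mul_right_cancel₀ hk
    push_cast at hcast ⊢
    linear_combination -hcast

/-- Both sides satisfy the recurrence `F (a + 1) = F a + X F (a + m)` and agree at `a = 0`; since the
factor `X` lowers the degree, this determines all coefficients, by induction on the degree and,
within it, on `a`. -/
theorem P_mul_Q (m : ℕ) (hm : 1 ≤ m) (a b : ℕ) : P m a * Q m b = Q m (a + b) := by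
  ext n
  induction n generalizing a with
  | zero => simp [P, Q]
  | succ n ihn =>
    induction a with
    | zero => simp [P_zero m hm]
    | succ a iha =>
      have h1 : a + 1 + b = (a + b) + 1 := by ring
      have h2 : a + b + m = a + m + b := by ring
      rw [P_succ m a hm, add_mul, mul_assoc, map_add, coeff_succ_X_mul, iha, ihn, h1, Q_succ,
        map_add, coeff_succ_X_mul, h2]

theorem P_mul_P (m : ℕ) (hm : 1 ≤ m) (a b : ℕ) : P m a * P m b = P m (a + b) := by
  have h : a + b + m - 1 = a + (b + m - 1) := by omega
  conv_rhs => rw [P, h, ← P_mul_Q m hm, ← P_mul_Q m hm]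
  conv_lhs => rw [P.eq_def m b]
  ring

theorem P_one_pow (m : ℕ) (hm : 1 ≤ m) (a : ℕ) : P m 1 ^ a = P m a := by
  induction a with
  | zero => simp [P_zero m hm]
  | succ a ih => rw [pow_succ, ih, P_mul_P m hm]

theorem P_one_eq (m : ℕ) (hm : 1 ≤ m) : P m 1 = 1 + X * P m 1 ^ m := by
  rw [P_one_pow m hm]
  have := P_succ m 0 hm
  simpa [P_zero m hm] using this

/-- The formal identity `H · (G - m (G - 1)) = G` for `G = P m 1` and `H = Q m 0`: it is
`1 = P m 0 = H - m X Q_{m-1}` multiplied by `G`. -/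
theorem Q_zero_mul (m : ℕ) (hm : 1 ≤ m) :
    Q m 0 * (P m 1 + C (-(m : ℝ)) * (P m 1 + C (-1))) = P m 1 := by
  have h0 : Q m 0 - C (m : ℝ) * (X * Q m (m - 1)) = 1 := by
    have := P_zero m hm
    rwa [P, zero_add] at this
  have h1 : P m 1 * Q m (m - 1) = P m 1 ^ m * Q m 0 := by
    rw [P_one_pow m hm, P_mul_Q m hm, P_mul_Q m hm]
    congr 1; omega
  have h2 := P_one_eq m hm
  simp only [map_neg, map_one]
  linear_combination P m 1 * h0 - (C (m : ℝ)) * Q m 0 * h2 + C (m : ℝ) * X * h1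

theorem coeff_P_one (m : ℕ) (hm : 1 ≤ m) (n : ℕ) :
    coeff n (P m 1) = ((m * n).choose n : ℝ) / (((m : ℝ) - 1) * n + 1) := by
  have hm' : (1 : ℝ) ≤ m := by exact_mod_cast hm
  rcases n with _ | k
  · simp [P, Q]
  · rw [P, map_sub, coeff_C_mul, coeff_succ_X_mul]
    simp only [Q, coeff_mk]
    have h1 : 1 + m * (k + 1) = m * (k + 1) + 1 := by ring
    have h2 : 1 + m - 1 + m * k = m * (k + 1) := by rw [mul_add]; omega
    have hle : k ≤ m * (k + 1) := by nlinarith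
    have h := Nat.choose_succ_right_eq (m * (k + 1)) k
    have hcast : ((m * (k + 1)).choose (k + 1) : ℝ) * ((k : ℝ) + 1)
      = ((m * (k + 1)).choose k : ℝ) * ((m : ℝ) * (k + 1) - k) := by
      have := congrArg (Nat.cast (R := ℝ)) h
      push_cast [Nat.cast_sub hle] at this
      exact this
    have hpos : ((m : ℝ) - 1) * ((k + 1 : ℕ) : ℝ) + 1 ≠ 0 := by
      have : 0 ≤ ((m : ℝ) - 1) * ((k + 1 : ℕ) : ℝ) := mul_nonneg (by linarith) (by positivity)
      linarith
    rw [h1, h2, Nat.choose_succ_succ, eq_div_iff hpos]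
    push_cast at hpos ⊢
    linear_combination ((m : ℝ) - 1) * hcast

/-! ### Real power series -/

/-- The sum of the real power series with coefficients `c`. -/
noncomputable def ps (c : ℕ → ℝ) (y : ℝ) : ℝ := ∑' n, c n * y ^ n

theorem ps_continuousOn (c : ℕ → ℝ) (r : ℝ) (h : Summable fun n => |c n| * r ^ n) :
    ContinuousOn (ps c) (Set.Icc (-r) r) := by
  refine continuousOn_tsum (fun n => by fun_prop) h ?_
  intro n y hy
  rw [Real.norm_eq_abs, abs_mul, abs_pow]
  gcongr
  exact abs_le.mpr hy

theorem ps_summable (c : ℕ → ℝ) (r : ℝ) (hr : 0 < r) (K : ℝ) (h : ∀ n, |c n| * r ^ n ≤ K) (y : ℝ)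
    (hy : |y| < r) : Summable fun n => |c n| * |y| ^ n := by
  have hg : Summable fun n => K * (|y| / r) ^ n :=
    (summable_geometric_of_lt_one (by positivity) ((div_lt_one hr).mpr hy)).mul_left K
  refine Summable.of_nonneg_of_le (fun n => by positivity) (fun n => ?_) hg
  rw [div_pow, ← mul_div_assoc, le_div_iff₀ (by positivity)]
  nlinarith [mul_le_mul_of_nonneg_right (h n) (pow_nonneg (abs_nonneg y) n)]

theorem ps_hasDerivAt (c : ℕ → ℝ) (r : ℝ) (hr : 0 < r) (h : ∀ n, |c n| * r ^ n ≤ 1) (y : ℝ)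
    (hy : |y| < r) :
    HasDerivAt (ps c) (∑' n : ℕ, c n * (n * y ^ (n - 1))) y := by
  obtain ⟨s, hs1, hs2⟩ := exists_between hy
  have hs0 : 0 < s := (abs_nonneg y).trans_lt hs1
  have hq : s / r < 1 := (div_lt_one hr).mpr hs2
  have hq' : ‖s / r‖ < 1 := by rwa [Real.norm_of_nonneg (by positivity)]
  have hu : Summable fun n : ℕ => s⁻¹ * ((n : ℝ) ^ 1 * (s / r) ^ n) :=
    (summable_pow_mul_geometric_of_norm_lt_one (R := ℝ) 1 (r := s / r) hq').mul_left s⁻¹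
  have hd (n : ℕ) (z : ℝ) (_ : z ∈ Set.Ioo (-s) s) :
      HasDerivAt (fun z => c n * z ^ n) (c n * (n * z ^ (n - 1))) z :=
    (hasDerivAt_pow n z).const_mul (c n)
  have hb (n : ℕ) (z : ℝ) (hz : z ∈ Set.Ioo (-s) s) :
      ‖c n * (n * z ^ (n - 1))‖ ≤ s⁻¹ * ((n : ℝ) ^ 1 * (s / r) ^ n) := by
    have hz' : |z| ≤ s := (abs_lt.mpr hz).le
    rcases n with _ | n
    · simp
    rw [Real.norm_eq_abs, abs_mul, abs_mul, abs_pow, Nat.abs_cast, Nat.add_sub_cancel, div_pow]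
    have h1 : |c (n + 1)| ≤ 1 / r ^ (n + 1) := by
      rw [le_div_iff₀ (by positivity)]; exact h _
    calc |c (n + 1)| * (((n + 1 : ℕ) : ℝ) * |z| ^ n)
        ≤ 1 / r ^ (n + 1) * (((n + 1 : ℕ) : ℝ) * s ^ n) := by gcongr
      _ = _ := by field_simp; ring
  have hy0 : Summable fun n => c n * y ^ n := by
    have := ps_summable c r hr 1 h y hy
    exact Summable.of_norm (by simpa [abs_mul] using this)
  exact hasDerivAt_tsum_of_isPreconnected (g := fun n z => c n * z ^ n)
    (g' := fun n z => c n * (n * z ^ (n - 1))) hu isOpen_Ioo isPreconnected_Ioo hd hb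
    (abs_lt.mp hs1) hy0 (abs_lt.mp hs1)

theorem ps_mul_deriv (c : ℕ → ℝ) (y : ℝ) :
    y * (∑' n : ℕ, c n * (n * y ^ (n - 1))) = ps (fun n => n * c n) y := by
  rw [ps, ← tsum_mul_left]
  congr 1; ext n
  rcases n with _ | n
  · simp
  · rw [Nat.add_sub_cancel, pow_succ]; ring

/-- Absolute convergence of the formal series `f` at the real point `y`. -/
def AS (f : PowerSeries ℝ) (y : ℝ) : Prop := Summable fun n => ‖coeff n f * y ^ n‖

/-- The value of the formal series `f` at `y`, meaningful where the series converges. -/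
noncomputable def ev (f : PowerSeries ℝ) (y : ℝ) : ℝ := ps (fun n => coeff n f) y

theorem mul_term (f g : PowerSeries ℝ) (y : ℝ) (n : ℕ) : coeff n (f * g) * y ^ n =
    ∑ kl ∈ Finset.HasAntidiagonal.antidiagonal n, (coeff kl.1 f * y ^ kl.1) * (coeff kl.2 g * y ^ kl.2) := by
  rw [coeff_mul, Finset.sum_mul]
  refine Finset.sum_congr rfl fun kl hkl => ?_
  rw [← Finset.HasAntidiagonal.mem_antidiagonal.mp hkl, pow_add]; ring

theorem AS.mul {f g : PowerSeries ℝ} {y : ℝ} (hf : AS f y) (hg : AS g y) : AS (f * g) y := by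
  unfold AS
  simp only [mul_term]
  exact summable_norm_sum_mul_antidiagonal_of_summable_norm
    (f := fun n => coeff n f * y ^ n) (g := fun n => coeff n g * y ^ n) hf hg

theorem ev_mul {f g : PowerSeries ℝ} {y : ℝ} (hf : AS f y) (hg : AS g y) :
    ev (f * g) y = ev f y * ev g y := by
  unfold ev ps
  simp only [mul_term]
  exact (tsum_mul_tsum_eq_tsum_sum_antidiagonal_of_summable_norm
    (f := fun n => coeff n f * y ^ n) (g := fun n => coeff n g * y ^ n) hf hg).symm

theorem AS.add {f g : PowerSeries ℝ} {y : ℝ} (hf : AS f y) (hg : AS g y) : AS (f + g) y := by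
  refine Summable.of_nonneg_of_le (fun _ => norm_nonneg _) (fun n => ?_) (Summable.add hf hg)
  rw [map_add, add_mul]
  exact norm_add_le _ _

theorem ev_add {f g : PowerSeries ℝ} {y : ℝ} (hf : AS f y) (hg : AS g y) :
    ev (f + g) y = ev f y + ev g y := by
  unfold ev ps
  simp only [map_add, add_mul]
  exact Summable.tsum_add hf.of_norm hg.of_norm

theorem AS_C (a y : ℝ) : AS (C a) y :=
  summable_of_ne_finset_zero (s := {0}) fun n hn => by
    simp [coeff_C, Finset.notMem_singleton.mp hn]

theorem ev_C (a y : ℝ) : ev (C a) y = a := by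
  rw [ev, ps, tsum_eq_single 0 fun n hn => by simp [coeff_C, hn]]
  simp

theorem AS_X (y : ℝ) : AS X y :=
  summable_of_ne_finset_zero (s := {1}) fun n hn => by
    simp [coeff_X, Finset.notMem_singleton.mp hn]

theorem ev_X (y : ℝ) : ev X y = y := by
  rw [ev, ps, tsum_eq_single 1 fun n hn => by simp [coeff_X, hn]]
  simp

theorem AS_ev_pow {f : PowerSeries ℝ} {y : ℝ} (hf : AS f y) (k : ℕ) :
    AS (f ^ k) y ∧ ev (f ^ k) y = ev f y ^ k := by
  induction k with
  | zero => simpa using And.intro (AS_C 1 y) (ev_C 1 y)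
  | succ k ih =>
    simp only [pow_succ]
    exact ⟨ih.1.mul hf, by rw [ev_mul ih.1 hf, ih.2]⟩

theorem ps_shift (c : ℕ → ℝ) (h0 : c 0 = 0) (y : ℝ) :
    ∑' n : ℕ, c (n + 1) * y ^ (n + 1) = ps c y := by
  refine (add_left_injective 1).tsum_eq (f := fun n => c n * y ^ n) ?_
  intro n hn
  rcases n with _ | n
  · simp [h0] at hn
  · exact ⟨n, rfl⟩

theorem ps_zero (c : ℕ → ℝ) : ps c 0 = c 0 := by
  rw [ps, tsum_eq_single 0 fun n hn => by simp [hn]]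
  simp

/-! ### The dilogarithm -/

/-- The `n = 0` coefficient is `1 / 0 = 0`, so the sum may start at `0`. -/
theorem Li2_eq_ps (z : ℝ) : Li2 z = ps (fun n => 1 / (n : ℝ) ^ 2) z := by
  rw [← ps_shift _ (by simp), Li2]
  congr 1; ext n
  push_cast; ring

theorem Li2_continuousOn : ContinuousOn Li2 (Set.Icc (-1) 1) := by
  have : Li2 = ps (fun n => 1 / (n : ℝ) ^ 2) := funext Li2_eq_ps
  rw [this]
  apply ps_continuousOn
  simp

theorem Li2_hasDerivAt (z : ℝ) (hz : |z| < 1) :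
    ∃ d, HasDerivAt Li2 d z ∧ z * d = -Real.log (1 - z) := by
  have h : Li2 = ps (fun n => 1 / (n : ℝ) ^ 2) := funext Li2_eq_ps
  have hb (n : ℕ) : |1 / (n : ℝ) ^ 2| * 1 ^ n ≤ 1 := by
    rw [one_pow, mul_one, abs_of_nonneg (by positivity)]
    rcases n with _ | n
    · simp
    · rw [div_le_one (by positivity)]
      have : (1 : ℝ) ≤ ((n + 1 : ℕ) : ℝ) := by simp
      nlinarith
  refine ⟨_, h ▸ ps_hasDerivAt _ 1 one_pos hb z hz, ?_⟩
  rw [ps_mul_deriv, ← ps_shift _ (by simp), ← (Real.hasSum_pow_div_log_of_abs_lt_one hz).tsum_eq]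
  congr 1; ext n
  push_cast
  field_simp

/-! ### Two calculus facts on symmetric intervals -/

/-- The derivative is only required away from `0`, because the derivatives of the series below are
known only after multiplication by the variable. -/
theorem eq_zero_of_deriv (f : ℝ → ℝ) (r : ℝ) (hc : ContinuousOn f (Set.Icc (-r) r))
    (hd : ∀ y, y ≠ 0 → |y| < r → HasDerivAt f 0 y) (h0 : f 0 = 0) (y : ℝ) (hy : |y| ≤ r) :
    f y = 0 := by
  have hy' := abs_le.mp hy
  rcases lt_trichotomy y 0 with h | h | h
  · obtain ⟨c, _, hc⟩ := exists_hasDerivAt_eq_slope f (fun _ => 0) h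
      (hc.mono (Set.Icc_subset_Icc hy'.1 (by linarith)))
      (fun z hz => hd z hz.2.ne (abs_lt.mpr ⟨by linarith [hz.1], by linarith [hz.2]⟩))
    rw [h0, eq_div_iff (by linarith)] at hc
    linarith
  · rw [h, h0]
  · obtain ⟨c, _, hc⟩ := exists_hasDerivAt_eq_slope f (fun _ => 0) h
      (hc.mono (Set.Icc_subset_Icc (by linarith) hy'.2))
      (fun z hz => hd z hz.1.ne' (abs_lt.mpr ⟨by linarith [hz.1], by linarith [hz.2]⟩))
    rw [h0, eq_div_iff (by linarith)] at hc
    linarith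

theorem pos_of_forall_ne_zero (f : ℝ → ℝ) (r : ℝ) (hc : ContinuousOn f (Set.Ioo (-r) r))
    (hne : ∀ y, |y| < r → f y ≠ 0) (h0 : 0 < f 0) (y : ℝ) (hy : |y| < r) : 0 < f y := by
  by_contra hcon
  have hr : 0 < r := (abs_nonneg y).trans_lt hy
  obtain ⟨z, hz, hz0⟩ := isPreconnected_Ioo.intermediate_value (a := y) (b := 0)
    (abs_lt.mp hy) (by constructor <;> linarith) hc ⟨not_lt.mp hcon, h0.le⟩
  exact hne z (abs_lt.mpr hz) hz0

/-! ### The Fuss–Catalan function -/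

/-- The radius of convergence of the Fuss–Catalan series. -/
noncomputable def rho (m : ℕ) : ℝ := ((m : ℝ) - 1) ^ (m - 1) / (m : ℝ) ^ m

theorem rho_pos (m : ℕ) (hm : 2 ≤ m) : 0 < rho m := by
  have hm' : (2 : ℝ) ≤ m := by exact_mod_cast hm
  have : 0 < (m : ℝ) - 1 := by linarith
  unfold rho
  positivity

/-- The left side is one term of the binomial expansion of `(1/m + (m - 1)/m)^(mn) = 1`. -/
theorem choose_rho (m : ℕ) (hm : 2 ≤ m) (n : ℕ) : ((m * n).choose n : ℝ) * rho m ^ n ≤ 1 := by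
  have hm' : (2 : ℝ) ≤ m := by exact_mod_cast hm
  have h1 : 0 < (m : ℝ) - 1 := by linarith
  have h := add_pow (1 / (m : ℝ)) (((m : ℝ) - 1) / m) (m * n)
  have hs : 1 / (m : ℝ) + ((m : ℝ) - 1) / m = 1 := by field_simp; ring
  rw [hs, one_pow] at h
  have hle : n ≤ m * n := by nlinarith
  have := Finset.single_le_sum (f := fun k => (1 / (m : ℝ)) ^ k * (((m : ℝ) - 1) / m) ^ (m * n - k)
    * ((m * n).choose k : ℝ)) (fun k _ => by positivity) (Finset.mem_range_succ_iff.mpr hle)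
  rw [← h] at this
  refine le_trans (le_of_eq ?_) this
  have e1 : m * n - n = (m - 1) * n := by rw [Nat.sub_mul, one_mul]
  have e2 : (m : ℝ) ^ m = m * (m : ℝ) ^ (m - 1) := by
    rw [← pow_succ']; congr 1; omega
  rw [e1, pow_mul, ← mul_pow, mul_comm, rho, e2]
  congr 2
  rw [div_pow]
  field_simp

theorem coeff_P_one_nonneg (m : ℕ) (hm : 2 ≤ m) (n : ℕ) : 0 ≤ coeff n (P m 1) := by
  have hm' : (2 : ℝ) ≤ m := by exact_mod_cast hm
  rw [coeff_P_one m (by omega)]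
  have : 0 ≤ (m : ℝ) - 1 := by linarith
  positivity

theorem coeff_P_one_bound (m : ℕ) (hm : 2 ≤ m) (n : ℕ) :
    |coeff n (P m 1)| * rho m ^ n ≤ 1 := by
  rw [abs_of_nonneg (coeff_P_one_nonneg m hm n)]
  refine le_trans ?_ (choose_rho m hm n)
  have := rho_pos m hm
  gcongr
  rw [coeff_P_one m (by omega)]
  have hm' : (2 : ℝ) ≤ m := by exact_mod_cast hm
  have : 0 ≤ ((m : ℝ) - 1) * n := mul_nonneg (by linarith) (by positivity)
  exact div_le_self (by positivity) (by linarith)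

theorem AS_P (m : ℕ) (hm : 2 ≤ m) (y : ℝ) (hy : |y| < rho m) : AS (P m 1) y := by
  simpa [AS, abs_mul] using ps_summable _ _ (rho_pos m hm) 1 (coeff_P_one_bound m hm) y hy

theorem AS_Q (m : ℕ) (hm : 2 ≤ m) (y : ℝ) (hy : |y| < rho m) : AS (Q m 0) y := by
  have := ps_summable (fun n => ((m * n).choose n : ℝ)) _ (rho_pos m hm) 1
    (fun n => by simpa using choose_rho m hm n) y hy
  simpa [AS, Q, abs_mul] using this

theorem G_eq (m : ℕ) (hm : 2 ≤ m) (y : ℝ) (hy : AS (P m 1) y) :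
    ev (P m 1) y = 1 + y * ev (P m 1) y ^ m := by
  conv_lhs => rw [P_one_eq m (by omega)]
  have h := AS_ev_pow hy m
  have h1 : (1 : PowerSeries ℝ) = C 1 := by simp
  rw [h1, ev_add (AS_C 1 y) ((AS_X y).mul h.1), ev_mul (AS_X y) h.1, ev_X, ev_C, h.2]

theorem H_eq (m : ℕ) (hm : 2 ≤ m) (y : ℝ) (hy : |y| < rho m) :
    ev (Q m 0) y * (ev (P m 1) y - m * (ev (P m 1) y - 1)) = ev (P m 1) y := by
  have hP := AS_P m hm y hy
  have h1 := hP.add (AS_C (-1) y)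
  have h2 := (AS_C (-(m : ℝ)) y).mul h1
  conv_rhs => rw [← Q_zero_mul m (by omega)]
  rw [ev_mul (AS_Q m hm y hy) (hP.add h2), ev_add hP h2, ev_mul (AS_C _ y) h1,
    ev_add hP (AS_C _ y), ev_C, ev_C]
  ring

theorem G_ne_zero (m : ℕ) (hm : 2 ≤ m) (y : ℝ) (hy : AS (P m 1) y) : ev (P m 1) y ≠ 0 := by
  intro h
  have := G_eq m hm y hy
  rw [h, zero_pow (by omega)] at this
  norm_num at this

theorem G_zero (m : ℕ) (hm : 2 ≤ m) : ev (P m 1) 0 = 1 := by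
  rw [ev, ps_zero, coeff_P_one m (by omega)]; simp

/-- The relation for the derivative `d` of `G` comes from differentiating `G = 1 + y G^m`. -/
theorem G_hasDerivAt (m : ℕ) (hm : 2 ≤ m) (y : ℝ) (hy : |y| < rho m) :
    ∃ d, HasDerivAt (ev (P m 1)) d y ∧
      y * d * (ev (P m 1) y - m * (ev (P m 1) y - 1)) = ev (P m 1) y * (ev (P m 1) y - 1) := by
  have hd : HasDerivAt (ev (P m 1)) _ y :=
    ps_hasDerivAt _ _ (rho_pos m hm) (coeff_P_one_bound m hm) y hy
  refine ⟨_, hd, ?_⟩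
  generalize (∑' n : ℕ, (coeff n) (P m 1) * (↑n * y ^ (n - 1))) = d at hd
  have hd2 : HasDerivAt (fun z => 1 + z * ev (P m 1) z ^ m) _ y :=
    ((hasDerivAt_id y).mul (hd.pow m)).const_add 1
  have hev : ev (P m 1) =ᶠ[nhds y] fun z => 1 + z * ev (P m 1) z ^ m := by
    filter_upwards [(isOpen_lt continuous_abs continuous_const).mem_nhds hy] with z hz
    exact G_eq m hm z (AS_P m hm z hz)
  have hu := hd.unique (hd2.congr_of_eventuallyEq hev)
  have hG := G_eq m hm y (AS_P m hm y hy)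
  have hpow : ev (P m 1) y ^ m = ev (P m 1) y * ev (P m 1) y ^ (m - 1) := by
    rw [← pow_succ']; congr 1; omega
  simp only [id, Pi.pow_apply, one_mul] at hu
  rw [hpow] at hu hG
  generalize ev (P m 1) y ^ (m - 1) = p at *
  generalize ev (P m 1) y = g at *
  linear_combination y * g * hu - (g + m * y * d) * hG

theorem G_continuousOn_Ioo (m : ℕ) (hm : 2 ≤ m) :
    ContinuousOn (ev (P m 1)) (Set.Ioo (-rho m) (rho m)) := fun y hy => by
  obtain ⟨d, hd, -⟩ := G_hasDerivAt m hm y (abs_lt.mpr hy)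
  exact hd.continuousAt.continuousWithinAt

theorem G_pos (m : ℕ) (hm : 2 ≤ m) (y : ℝ) (hy : |y| < rho m) : 0 < ev (P m 1) y :=
  pos_of_forall_ne_zero _ _ (G_continuousOn_Ioo m hm) (fun z hz => G_ne_zero m hm z (AS_P m hm z hz))
    (by rw [G_zero m hm]; exact one_pos) y hy

/-- This says `G < m / (m - 1)`; the expression cannot vanish since its product with `H` is `G`. -/
theorem denom_pos (m : ℕ) (hm : 2 ≤ m) (y : ℝ) (hy : |y| < rho m) :
    0 < ev (P m 1) y - m * (ev (P m 1) y - 1) := by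
  have hc := G_continuousOn_Ioo m hm
  refine pos_of_forall_ne_zero (fun y => ev (P m 1) y - m * (ev (P m 1) y - 1)) _
    (hc.sub (continuousOn_const.mul (hc.sub continuousOn_const)))
    (fun z hz h => ?_) (by simp [G_zero m hm]) y hy
  have := H_eq m hm z hz
  rw [h, mul_zero] at this
  exact (G_pos m hm z hz).ne this

theorem G_lt_two (m : ℕ) (hm : 2 ≤ m) (y : ℝ) (hy : |y| < rho m) : ev (P m 1) y < 2 := by
  have h := denom_pos m hm y hy
  have hm' : (2 : ℝ) ≤ m := by exact_mod_cast hm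
  by_contra hc
  nlinarith

/-- Absolute convergence at the boundary: the coefficients are nonnegative and `G < 2` inside the
interval, so by continuity the partial sums at `rho m` are at most `2`. -/
theorem P_summable_rho (m : ℕ) (hm : 2 ≤ m) :
    Summable fun n => |coeff n (P m 1)| * rho m ^ n := by
  have hr := rho_pos m hm
  simp only [abs_of_nonneg (coeff_P_one_nonneg m hm _)]
  refine summable_of_sum_range_le (c := 2)
    (fun n => mul_nonneg (coeff_P_one_nonneg m hm n) (by positivity)) fun N => ?_
  have hcont : Continuous fun y : ℝ => ∑ n ∈ Finset.range N, coeff n (P m 1) * y ^ n := by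
    fun_prop
  have ht : Filter.Tendsto (fun y : ℝ => ∑ n ∈ Finset.range N, coeff n (P m 1) * y ^ n)
      (nhdsWithin (rho m) (Set.Iio (rho m))) (nhds (∑ n ∈ Finset.range N, coeff n (P m 1) *
        rho m ^ n)) := (hcont.tendsto _).mono_left nhdsWithin_le_nhds
  refine le_of_tendsto ht ?_
  filter_upwards [Ioo_mem_nhdsLT hr] with y hy
  have hy' : |y| < rho m := by rw [abs_of_pos hy.1]; exact hy.2
  refine le_trans ?_ (G_lt_two m hm y hy').le
  exact (AS_P m hm y hy').of_norm.sum_le_tsum _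
    (fun n _ => mul_nonneg (coeff_P_one_nonneg m hm n) (pow_nonneg hy.1.le n))

theorem AS_P_closed (m : ℕ) (hm : 2 ≤ m) (y : ℝ) (hy : |y| ≤ rho m) : AS (P m 1) y := by
  refine Summable.of_nonneg_of_le (fun _ => norm_nonneg _) (fun n => ?_) (P_summable_rho m hm)
  rw [Real.norm_eq_abs, abs_mul, abs_pow]
  gcongr

theorem G_continuousOn (m : ℕ) (hm : 2 ≤ m) :
    ContinuousOn (ev (P m 1)) (Set.Icc (-rho m) (rho m)) :=
  ps_continuousOn _ _ (P_summable_rho m hm)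

theorem G_mem_Icc (m : ℕ) (hm : 2 ≤ m) (y : ℝ) (hy : y ∈ Set.Icc (-rho m) (rho m)) :
    ev (P m 1) y ∈ Set.Icc (0 : ℝ) 2 := by
  have hr := rho_pos m hm
  have hcl : closure (Set.Ioo (-rho m) (rho m)) = Set.Icc (-rho m) (rho m) :=
    closure_Ioo (by linarith)
  have hmaps : Set.MapsTo (ev (P m 1)) (Set.Ioo (-rho m) (rho m)) (Set.Icc 0 2) := fun z hz =>
    ⟨(G_pos m hm z (abs_lt.mpr hz)).le, (G_lt_two m hm z (abs_lt.mpr hz)).le⟩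
  have := hmaps.closure_of_continuousOn (by rw [hcl]; exact G_continuousOn m hm)
  rw [hcl, isClosed_Icc.closure_eq] at this
  exact this hy

/-- `∑_{n ≥ 1} binom(mn, n) yⁿ / n = m log G(y)`: multiplied by `y`, the derivatives of the two sides
are `H - 1` and `m y G' / G`. -/
theorem log_G (m : ℕ) (hm : 2 ≤ m) (y : ℝ) (hy : |y| < rho m) :
    ps (fun n => ((m * n).choose n : ℝ) / n) y = m * Real.log (ev (P m 1) y) := by
  have hr := rho_pos m hm
  have hb (n : ℕ) : |((m * n).choose n : ℝ) / n| * rho m ^ n ≤ 1 := by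
    refine le_trans ?_ (choose_rho m hm n)
    gcongr
    rw [abs_of_nonneg (by positivity)]
    rcases n with _ | n
    · simp
    · exact div_le_self (by positivity) (by simp)
  have hd (z : ℝ) (hz : |z| < rho m) : ∃ d, HasDerivAt (fun y =>
      ps (fun n => ((m * n).choose n : ℝ) / n) y - m * Real.log (ev (P m 1) y)) d z ∧
      z * d = 0 := by
    obtain ⟨g', hg', hg⟩ := G_hasDerivAt m hm z hz
    have hG := G_pos m hm z hz
    refine ⟨_, (ps_hasDerivAt _ _ hr hb z hz).sub ((hg'.log hG.ne').const_mul (m : ℝ)), ?_⟩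
    have hH : ps (fun n => (n : ℝ) * (((m * n).choose n : ℝ) / n)) z = ev (Q m 0) z - 1 := by
      have hs := (AS_Q m hm z hz).of_norm
      rw [ev, ps, ps, hs.tsum_eq_zero_add, ← ps, ← ps_shift _ (by simp)]
      simp only [Q, coeff_mk]
      simp only [Nat.choose_zero_right, Nat.cast_one, pow_zero, mul_one, add_sub_cancel_left,
        zero_add]
      congr 1; ext n
      field_simp
    rw [mul_sub, ps_mul_deriv, hH]
    have hD := denom_pos m hm z hz
    have hHe := H_eq m hm z hz
    generalize ev (Q m 0) z = H at *
    generalize ev (P m 1) z = g at *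
    have : (g - m * (g - 1)) * g * (H - 1 - z * (m * (g' / g))) = 0 := by
      field_simp
      linear_combination g * hHe - m * hg
    exact (mul_eq_zero.mp this).resolve_left (by positivity)
  have := eq_zero_of_deriv (fun y =>
      ps (fun n => ((m * n).choose n : ℝ) / n) y - m * Real.log (ev (P m 1) y))
      |y| ?_ ?_ ?_ y le_rfl
  · exact sub_eq_zero.mp this
  · intro z hz
    obtain ⟨d, hd, -⟩ := hd z ((abs_le.mpr hz).trans_lt hy)
    exact hd.continuousAt.continuousWithinAt
  · intro z hz0 hz
    obtain ⟨d, hd, h0⟩ := hd z (hz.trans hy)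
    rwa [(mul_eq_zero.mp h0).resolve_left hz0] at hd
  · simp [ps_zero, G_zero m hm]

/-- The dilogarithm formula at `y = -x`: the derivative of the left side vanishes for
`0 < |y| < rho m`, and the left side is continuous up to the boundary. -/
theorem closed_form (m : ℕ) (hm : 2 ≤ m) (y : ℝ) (hy : |y| ≤ rho m) :
    ps (fun n => ((m * n).choose n : ℝ) / (n : ℝ) ^ 2) y + (m * Li2 (1 - ev (P m 1) y) +
      (m : ℝ) ^ 2 / 2 * Real.log (ev (P m 1) y) ^ 2) = 0 := by
  have hr := rho_pos m hm
  have hb (n : ℕ) : |((m * n).choose n : ℝ) / (n : ℝ) ^ 2| * rho m ^ n ≤ 1 / (n : ℝ) ^ 2 := by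
    rw [abs_of_nonneg (by positivity), div_mul_eq_mul_div]
    gcongr
    exact choose_rho m hm n
  have hb1 (n : ℕ) : |((m * n).choose n : ℝ) / (n : ℝ) ^ 2| * rho m ^ n ≤ 1 := by
    refine (hb n).trans ?_
    rcases n with _ | n
    · simp
    · rw [div_le_one (by positivity)]
      have : (1 : ℝ) ≤ ((n + 1 : ℕ) : ℝ) := by simp
      nlinarith
  refine eq_zero_of_deriv (fun y => ps (fun n => ((m * n).choose n : ℝ) / (n : ℝ) ^ 2) y +
    (m * Li2 (1 - ev (P m 1) y) + (m : ℝ) ^ 2 / 2 * Real.log (ev (P m 1) y) ^ 2)) (rho m)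
    ?_ ?_ ?_ y hy
  · have hG := G_continuousOn m hm
    refine (ps_continuousOn _ _ ?_).add ((continuousOn_const.mul ?_).add
      (continuousOn_const.mul ((hG.log fun z hz => ?_).pow 2)))
    · exact Summable.of_nonneg_of_le (fun n => by positivity) hb
        (Real.summable_one_div_nat_pow.mpr (by norm_num))
    · refine Li2_continuousOn.comp (continuousOn_const.sub hG) fun z hz => ?_
      have := G_mem_Icc m hm z hz
      constructor <;> linarith [this.1, this.2]
    · exact G_ne_zero m hm z (AS_P_closed m hm z (abs_le.mpr hz))
  · intro z hz0 hz
    obtain ⟨g', hg', hg⟩ := G_hasDerivAt m hm z hz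
    have hG := G_pos m hm z hz
    have hG2 := G_lt_two m hm z hz
    obtain ⟨l, hl, hlz⟩ := Li2_hasDerivAt (1 - ev (P m 1) z)
      (abs_lt.mpr ⟨by linarith, by linarith⟩)
    have hD := (ps_hasDerivAt _ _ hr hb1 z hz).add
      (((hl.comp z (hg'.const_sub 1)).const_mul (m : ℝ)).add
        (((hg'.log hG.ne').pow 2).const_mul ((m : ℝ) ^ 2 / 2)))
    have hS := ps_mul_deriv (fun n => ((m * n).choose n : ℝ) / (n : ℝ) ^ 2) z
    have hT : ps (fun n => (n : ℝ) * (((m * n).choose n : ℝ) / (n : ℝ) ^ 2)) z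
        = m * Real.log (ev (P m 1) z) := by
      rw [← log_G m hm z hz]
      congr 1; ext n
      rcases n with _ | n
      · simp
      · field_simp
    rw [hT] at hS
    have hden := denom_pos m hm z hz
    have hG1 : ev (P m 1) z - 1 ≠ 0 := by
      have := G_eq m hm z (AS_P m hm z hz)
      rw [this, add_sub_cancel_left]
      positivity
    rw [sub_sub_cancel] at hlz
    generalize (∑' n : ℕ, ((m * n).choose n : ℝ) / (n : ℝ) ^ 2 * (n * z ^ (n - 1))) = s at *
    generalize Real.log (ev (P m 1) z) = L at *
    generalize ev (P m 1) z = g at *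
    have : z * (g - 1) * g *
        (s + (m * (l * -g') + m ^ 2 / 2 * ((2 : ℕ) * L ^ (2 - 1) * (g' / g)))) = 0 := by
      have e : g * (g' / g) = g' := mul_div_cancel₀ g' hG.ne'
      linear_combination g * (g - 1) * hS + m * z * g * g' * hlz - m * L * hg +
        m ^ 2 * L * z * (g - 1) * e
    rw [(mul_eq_zero.mp this).resolve_left (by positivity)] at hD
    exact hD
  · simp [ps_zero, G_zero m hm, Li2]

theorem FC_eq (m : ℕ) (hm : 2 ≤ m) (y : ℝ) : FC m y = ev (P m 1) y := by
  unfold FC ev ps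
  simp only [coeff_P_one m (by omega : 1 ≤ m)]

end FussCatalan

theorem stmt16 (m : ℕ) (hm : 2 ≤ m) (x : ℝ)
    (hx : |x| ≤ ((m : ℝ) - 1) ^ (m - 1) / (m : ℝ) ^ m) :
    ∑' n : ℕ, (Nat.choose (m * (n + 1)) (n + 1) : ℝ) * (-1) ^ (n + 1) * x ^ (n + 1) /
        ((n : ℝ) + 1) ^ 2
      = -(m : ℝ) * Li2 (1 - FC m (-x)) - (m : ℝ) ^ 2 / 2 * (Real.log (FC m (-x))) ^ 2 := by
  have h := FussCatalan.closed_form m hm (-x) (by rw [abs_neg]; exact hx)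
  rw [FussCatalan.FC_eq m hm]
  have hs : ∑' n : ℕ, (Nat.choose (m * (n + 1)) (n + 1) : ℝ) * (-1) ^ (n + 1) * x ^ (n + 1) /
      ((n : ℝ) + 1) ^ 2 = FussCatalan.ps (fun n => ((m * n).choose n : ℝ) / (n : ℝ) ^ 2) (-x) := by
    rw [← FussCatalan.ps_shift _ (by simp)]
    congr 1; ext n
    rw [neg_pow x]
    push_cast
    ring
  rw [hs]
  linear_combination h
end

section
/- Let m ≥ 2 be an integer and let x be a real number with |x| ≤ (m−1)^{m−1}/m^m. Then 1/2 < G_m(x) ≤ m/(m−1), and G_m(x) satisfies the equation G_m(x) = 1 + x·G_m(x)^m. -/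
open Finset PowerSeries

/-- The `n`-th Fuss–Catalan number of parameter `m = k + 1`. The shift to `k = m - 1` avoids
subtraction. -/
noncomputable def fussCoeff (k n : ℕ) : ℝ :=
  (Nat.choose ((k + 1) * n) n : ℝ) / (k * n + 1)

lemma fussCoeff_nonneg (k n : ℕ) : 0 ≤ fussCoeff k n := by
  unfold fussCoeff; positivity

/-- The `N`-th finite difference at `0` of a polynomial of degree less than `N` vanishes. -/
lemma alternating_sum_choose_mul_eval {N : ℕ} (P : Polynomial ℝ) (hP : P.natDegree < N) :
    ∑ d ∈ range (N + 1), (-1 : ℝ) ^ d * (N.choose d : ℝ) * P.eval (d : ℝ) = 0 := by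
  have h := congrFun (Polynomial.fwdDiff_iter_eq_zero_of_degree_lt hP) 0
  rw [fwdDiff_iter_eq_sum_shift] at h
  have h2 : ∑ d ∈ range (N + 1), (-1 : ℝ) ^ d * (N.choose d : ℝ) * P.eval (d : ℝ) =
      (-1) ^ N * ∑ d ∈ range (N + 1), ((-1 : ℤ) ^ (N - d) * (N.choose d : ℤ)) •
        P.eval ((0 : ℝ) + d • (1 : ℝ)) := by
    rw [mul_sum]
    refine sum_congr rfl fun d hd => ?_
    have hd : d ≤ N := by simpa [Nat.lt_succ_iff] using hd
    obtain ⟨e, rfl⟩ := Nat.exists_eq_add_of_le hd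
    have : ((-1 : ℝ) ^ e) * (-1) ^ e = 1 := by rw [← mul_pow]; simp
    simp only [add_tsub_cancel_left, zsmul_eq_mul, zero_add, nsmul_eq_mul, mul_one, pow_add]
    push_cast
    linear_combination (-(-1 : ℝ) ^ d * ((d + e).choose d : ℝ) * P.eval (d : ℝ)) * this
  rw [h2, h]; simp

/-- Up to the factor `N!` (here `N + 2` in place of `N`) and a sign, the `d`-th term of the
coefficient of `X^N` in `F ∘ φ` is `binom(N, d)` times a value at `d` of a fixed polynomial of degree
`N - 1`. -/
lemma fussCoeff_mul_choose (k N d : ℕ) (hd : 1 ≤ d) (hdN : d ≤ N + 2) :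
    ((N + 2).factorial : ℝ) *
      (fussCoeff k d * (((k + 1) * d - 1 + (N + 2 - d)).choose ((k + 1) * d - 1) : ℝ)) =
    ((N + 2).choose d : ℝ) * (((k : ℝ) + 1) * d * ((k * d + 2).ascFactorial N : ℝ)) := by
  obtain ⟨e, he⟩ := Nat.exists_eq_add_of_le hdN
  obtain ⟨c, rfl⟩ := Nat.exists_eq_add_of_le' hd
  have e1 : (k + 1) * (c + 1) - 1 = k * (c + 1) + c := by
    rw [add_mul]; omega
  have e2 : N + 2 - (c + 1) = e := by omega
  have e3 : (k + 1) * (c + 1) = k * (c + 1) + (c + 1) := by ring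
  rw [fussCoeff, e1, e2, e3]
  have f1 := Nat.add_choose_mul_factorial_mul_factorial (k * (c + 1)) (c + 1)
  have f2 := Nat.add_choose_mul_factorial_mul_factorial (k * (c + 1) + c) e
  have f3 := Nat.add_choose_mul_factorial_mul_factorial (c + 1) e
  rw [← Nat.choose_symm_add] at f2 f3
  have f4 := Nat.factorial_mul_ascFactorial (k * (c + 1) + 1) N
  rw [← he] at f3
  have e5 : k * (c + 1) + c + e = k * (c + 1) + 1 + N := by omega
  rw [e5, ← f4] at f2
  rw [e5]
  have e6 : (k * (c + 1) + (c + 1)).factorial =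
      (k * (c + 1) + c + 1) * (k * (c + 1) + c).factorial := Nat.factorial_succ _
  rw [e6] at f1
  rw [Nat.factorial_succ (k * (c+1))] at f2
  have p1 : ((k * (c + 1)).factorial : ℝ) ≠ 0 := by positivity
  have p2 : ((k * (c + 1) + c).factorial : ℝ) ≠ 0 := by positivity
  have p3 : ((c + 1).factorial : ℝ) ≠ 0 := by positivity
  have p4 : ((e).factorial : ℝ) ≠ 0 := by positivity
  have p5 : ((k : ℝ) * (c + 1) + 1) ≠ 0 := by positivity
  have e7 : k * (c + 1) + 1 + 1 = k * (c + 1) + 2 := rfl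
  rw [e7] at f2
  rify at f1 f2 f3
  push_cast
  -- Only the factorial formulas for the binomials matter from here on.
  generalize ((k * (c + 1)).factorial : ℝ) = K at *
  generalize ((k * (c + 1) + c).factorial : ℝ) = L at *
  generalize ((c + 1).factorial : ℝ) = C at *
  generalize ((e).factorial : ℝ) = E at *
  generalize ((N + 2).factorial : ℝ) = M at *
  generalize (((k * (c + 1) + (c + 1)).choose (c + 1) : ℕ) : ℝ) = A at *
  generalize (((k * (c + 1) + 1 + N).choose (k * (c + 1) + c) : ℕ) : ℝ) = B at *
  generalize (((N + 2).choose (c + 1) : ℕ) : ℝ) = D at *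
  generalize (((k * (c + 1) + 2).ascFactorial N : ℕ) : ℝ) = F at *
  have a1 : A = (k * (c + 1) + c + 1) * L / (K * C) := by
    field_simp; linear_combination f1
  have b1 : B = (k * (c + 1) + 1) * K * F / (L * E) := by
    field_simp; linear_combination f2
  have d1 : D = M / (C * E) := by
    field_simp; linear_combination f3
  rw [a1, b1, d1]
  field_simp
  ring

lemma invOneSubPow_pow (m d : ℕ) :
    ((invOneSubPow ℝ m).val) ^ d = (invOneSubPow ℝ (m * d)).val := by
  simp_rw [invOneSubPow_eq_inv_one_sub_pow, pow_mul, Units.val_pow_eq_pow_val]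

/-- The series `φ = -X (1 - X)^(-(k + 1))`, at which the Fuss–Catalan series takes the value
`1 - X`. -/
noncomputable def fussSubst (k : ℕ) : ℝ⟦X⟧ := -X * (invOneSubPow ℝ (k + 1)).val

lemma hasSubst_fussSubst (k : ℕ) : HasSubst (fussSubst k) :=
  HasSubst.of_constantCoeff_zero' (by simp [fussSubst])

lemma coeff_fussSubst_pow (k N d : ℕ) :
    coeff N (fussSubst k ^ d) =
      if d ≤ N then (-1) ^ d * coeff (N - d) (invOneSubPow ℝ ((k + 1) * d)).val else 0 := by
  have : fussSubst k ^ d =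
      X ^ d * (C ((-1) ^ d) * (invOneSubPow ℝ ((k + 1) * d)).val) := by
    rw [fussSubst, mul_pow, invOneSubPow_pow, neg_pow, map_pow, map_neg, map_one]; ring
  rw [this, coeff_X_pow_mul', coeff_C_mul]

/-- The Fuss–Catalan numbers as a formal power series over `ℝ`. -/
noncomputable def fussSeries (k : ℕ) : ℝ⟦X⟧ := PowerSeries.mk (fussCoeff k)

lemma subst_fussSeries (k : ℕ) : (fussSeries k).subst (fussSubst k) = 1 - X := by
  ext N
  rw [coeff_subst' (hasSubst_fussSubst k), finsum_eq_sum_of_support_subset (s := range (N + 1))]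
  swap
  · intro d hd
    by_contra h
    apply hd
    simp only [coe_range, Set.mem_Iio, not_lt] at h
    simp only [coeff_fussSubst_pow]
    rw [if_neg (by omega), smul_zero]
  rcases N with _ | _ | N
  · simp [fussSeries, fussCoeff]
  · rw [sum_range_succ, sum_range_one, coeff_fussSubst_pow, coeff_fussSubst_pow]
    simp only [fussSeries, coeff_mk, fussCoeff]
    rw [invOneSubPow_val_eq_mk_sub_one_add_choose_of_pos _ _ (by simp : 0 < (k + 1) * (0 + 1))]
    have hk : (k : ℝ) + 1 ≠ 0 := by positivity
    simp [coeff_X, coeff_one, invOneSubPow_zero, hk]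
  · have hR : coeff (N + 1 + 1) (1 - X : ℝ⟦X⟧) = 0 := by simp [coeff_X, coeff_one]
    rw [hR]
    -- `P(d) = (k + 1) d ∏_{i=2}^{N+1} (k d + i)`, of degree `N + 1`.
    set P : Polynomial ℝ := Polynomial.C ((k : ℝ) + 1) * Polynomial.X *
      (ascPochhammer ℝ N).comp (Polynomial.C (k : ℝ) * Polynomial.X + Polynomial.C 2) with hP
    have hdeg : P.natDegree < N + 2 := by
      have h1 : (Polynomial.C (k : ℝ) * Polynomial.X + Polynomial.C 2).natDegree ≤ 1 := by
        compute_degree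
      have h2 : ((ascPochhammer ℝ N).comp
          (Polynomial.C (k : ℝ) * Polynomial.X + Polynomial.C 2)).natDegree ≤ N * 1 := by
        refine Polynomial.natDegree_comp_le.trans ?_
        rw [ascPochhammer_natDegree]
        gcongr
      have h3 : (Polynomial.C ((k : ℝ) + 1) * Polynomial.X).natDegree ≤ 1 := by
        compute_degree
      have := Polynomial.natDegree_mul_le_of_le h3 h2
      rw [← hP] at this
      omega
    have hev (d : ℕ) : P.eval (d : ℝ) =
        ((k : ℝ) + 1) * d * ((k * d + 2).ascFactorial N : ℝ) := by
      rw [← ascPochhammer_nat_eq_natCast_ascFactorial]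
      simp [hP]
    have h := alternating_sum_choose_mul_eval P hdeg
    have hN : ((N + 2).factorial : ℝ) ≠ 0 := by positivity
    apply (mul_eq_zero.mp ?_).resolve_left hN
    rw [mul_sum, ← h]
    refine sum_congr rfl fun d hd => ?_
    have hd' : d ≤ N + 2 := by simp at hd; omega
    rw [coeff_fussSubst_pow, if_pos hd', hev]
    rcases Nat.eq_zero_or_pos d with rfl | hd0
    -- The term `d = 0` is treated apart: `(k + 1) d - 1` would be a truncated subtraction.
    · simp [invOneSubPow_zero, coeff_one]
    · rw [invOneSubPow_val_eq_mk_sub_one_add_choose_of_pos _ _ (by positivity)]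
      have := fussCoeff_mul_choose k N d hd0 hd'
      simp only [fussSeries, coeff_mk, smul_eq_mul]
      linear_combination (-1) ^ d * this

lemma fussSeries_eq (k : ℕ) : fussSeries k = 1 + X * fussSeries k ^ (k + 1) := by
  have hs := hasSubst_fussSubst k
  have h0 : constantCoeff (fussSubst k) = 0 := by simp [fussSubst]
  have h1 : IsUnit (coeff 1 (fussSubst k)) := by
    have := coeff_fussSubst_pow k 1 1
    rw [pow_one, invOneSubPow_val_eq_mk_sub_one_add_choose_of_pos _ _ (by simp)] at this
    rw [this]; simp
  have hinj : Function.Injective (fun f : ℝ⟦X⟧ => f.subst (fussSubst k)) := by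
    intro f g hfg
    have := congrArg (fun f : ℝ⟦X⟧ => f.subst ((fussSubst k).substInvOfIsUnit h1)) hfg
    simpa [subst_comp_subst_apply hs (HasSubst.substInvOfIsUnit _ _),
      subst_substInvOfIsUnit_right _ h0] using this
  apply hinj
  have hC : (1 : ℝ⟦X⟧).subst (fussSubst k) = 1 := by
    rw [← coe_substAlgHom hs, map_one]
  simp only [subst_add hs, subst_mul hs, subst_pow hs, subst_X hs, hC]
  rw [subst_fussSeries]
  have : (invOneSubPow ℝ (k + 1)).val * (1 - X) ^ (k + 1) = 1 := by
    rw [← invOneSubPow_inv_eq_one_sub_pow]; exact Units.val_inv _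
  rw [fussSubst]
  linear_combination X * this

/-- For nonnegative coefficients, the truncation of a product is at most the product of the
truncations. -/
lemma sum_coeff_mul_le (f g : ℝ⟦X⟧) (hf : ∀ n, 0 ≤ coeff n f) (hg : ∀ n, 0 ≤ coeff n g)
    (r : ℝ) (hr : 0 ≤ r) (N : ℕ) :
    ∑ n ∈ range N, coeff n (f * g) * r ^ n ≤
      (∑ n ∈ range N, coeff n f * r ^ n) * ∑ n ∈ range N, coeff n g * r ^ n := by
  rw [sum_mul_sum, ← sum_product']
  have : ∑ n ∈ range N, coeff n (f * g) * r ^ n =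
      ∑ x ∈ (range N).sigma (fun n => antidiagonal n),
        coeff x.2.1 f * r ^ x.2.1 * (coeff x.2.2 g * r ^ x.2.2) := by
    rw [sum_sigma]
    refine sum_congr rfl fun n _ => ?_
    rw [coeff_mul, sum_mul]
    refine sum_congr rfl fun p hp => ?_
    rw [← mem_antidiagonal.mp hp, pow_add]; ring
  rw [this]
  have hinj : Set.InjOn (fun x : (_ : ℕ) × (ℕ × ℕ) => x.2)
      ((range N).sigma (fun n => antidiagonal n)) := by
    rintro ⟨n, p⟩ h ⟨n', p'⟩ h' (rfl : p = p')
    simp at h h'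
    obtain rfl : n = n' := by omega
    rfl
  rw [← sum_image (f := fun p : ℕ × ℕ => coeff p.1 f * r ^ p.1 * (coeff p.2 g * r ^ p.2)) hinj]
  refine sum_le_sum_of_subset_of_nonneg ?_ fun p _ _ => ?_
  · intro p hp
    simp at hp ⊢
    omega
  · have := hf p.1; have := hg p.2; positivity

lemma coeff_pow_nonneg (f : ℝ⟦X⟧) (hf : ∀ n, 0 ≤ coeff n f) (j n : ℕ) :
    0 ≤ coeff n (f ^ j) := by
  induction j generalizing n with
  | zero => rw [pow_zero, coeff_one]; split_ifs <;> norm_num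
  | succ j ih =>
    rw [pow_succ, coeff_mul]
    exact sum_nonneg fun p _ => mul_nonneg (ih _) (hf _)

lemma sum_coeff_pow_le (f : ℝ⟦X⟧) (hf : ∀ n, 0 ≤ coeff n f)
    (r : ℝ) (hr : 0 ≤ r) (N j : ℕ) :
    ∑ n ∈ range N, coeff n (f ^ j) * r ^ n ≤ (∑ n ∈ range N, coeff n f * r ^ n) ^ j := by
  induction j with
  | zero =>
    rcases N with _ | N
    · simp
    · simp [sum_range_succ', coeff_one]
  | succ j ih =>
    rw [pow_succ, pow_succ]
    refine (sum_coeff_mul_le _ _ (coeff_pow_nonneg f hf j) hf r hr N).trans ?_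
    have : 0 ≤ ∑ n ∈ range N, coeff n f * r ^ n :=
      sum_nonneg fun n _ => mul_nonneg (hf n) (by positivity)
    gcongr

lemma fussCoeff_zero (k : ℕ) : fussCoeff k 0 = 1 := by simp [fussCoeff]

lemma fussCoeff_succ (k n : ℕ) :
    fussCoeff k (n + 1) = coeff n (fussSeries k ^ (k + 1)) := by
  have := congrArg (coeff (n + 1)) (fussSeries_eq k)
  rw [map_add, coeff_succ_X_mul] at this
  simpa [fussSeries, coeff_one] using this

/-- Any `B ≥ 0` with `1 + r B^(k + 1) ≤ B` bounds all partial sums at `r ≥ 0`: a partial sum is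
at most `1 + r S^(k + 1)`, where `S` is the preceding one. -/
lemma sum_fussCoeff_le (k : ℕ) (r B : ℝ) (hr : 0 ≤ r) (hB : 1 + r * B ^ (k + 1) ≤ B)
    (hB0 : 0 ≤ B) (N : ℕ) : ∑ n ∈ range N, fussCoeff k n * r ^ n ≤ B := by
  induction N with
  | zero => simpa
  | succ N ih =>
    have h1 : ∑ n ∈ range N, fussCoeff k (n + 1) * r ^ (n + 1) =
        r * ∑ n ∈ range N, coeff n (fussSeries k ^ (k + 1)) * r ^ n := by
      rw [mul_sum]
      exact sum_congr rfl fun n _ => by rw [fussCoeff_succ]; ring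
    rw [sum_range_succ', h1, fussCoeff_zero]
    have h2 := sum_coeff_pow_le (fussSeries k)
      (fun n => by simpa [fussSeries] using fussCoeff_nonneg k n) r hr N (k + 1)
    simp only [fussSeries, coeff_mk] at h2
    have h0 : 0 ≤ ∑ n ∈ range N, fussCoeff k n * r ^ n :=
      sum_nonneg fun n _ => mul_nonneg (fussCoeff_nonneg k n) (by positivity)
    have h3 := h2.trans (pow_le_pow_left₀ h0 ih _)
    have h4 := mul_le_mul_of_nonneg_left h3 hr
    simp only [fussSeries]
    linarith

/-- Evaluation at a point of absolute convergence commutes with powers. -/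
lemma hasSum_pow (f : ℝ⟦X⟧) (x : ℝ) (hf : Summable fun n => ‖coeff n f * x ^ n‖) (j : ℕ) :
    (Summable fun n => ‖coeff n (f ^ j) * x ^ n‖) ∧
      ∑' n, coeff n (f ^ j) * x ^ n = (∑' n, coeff n f * x ^ n) ^ j := by
  induction j with
  | zero =>
    have h : ∀ n, n ∉ range 1 → coeff n (f ^ 0) * x ^ n = 0 := by
      intro n hn
      have : n ≠ 0 := by simpa using hn
      simp [coeff_one, this]
    refine ⟨(summable_of_ne_finset_zero (s := range 1) h).norm, ?_⟩
    rw [tsum_eq_sum h]; simp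
  | succ j ih =>
    obtain ⟨h1, h2⟩ := ih
    have e : ∀ n, coeff n (f ^ (j + 1)) * x ^ n = ∑ p ∈ antidiagonal n,
        coeff p.1 (f ^ j) * x ^ p.1 * (coeff p.2 f * x ^ p.2) := by
      intro n
      rw [pow_succ, coeff_mul, sum_mul]
      refine sum_congr rfl fun p hp => ?_
      rw [← mem_antidiagonal.mp hp, pow_add]; ring
    simp_rw [e]
    have h3 := summable_norm_sum_mul_antidiagonal_of_summable_norm
      (f := fun n => coeff n (f ^ j) * x ^ n) (g := fun n => coeff n f * x ^ n) h1 hf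
    have h4 := tsum_mul_tsum_eq_tsum_sum_antidiagonal_of_summable_norm
      (f := fun n => coeff n (f ^ j) * x ^ n) (g := fun n => coeff n f * x ^ n) h1 hf
    refine ⟨h3, ?_⟩
    rw [← h4, h2, pow_succ]

theorem stmt18 (m : ℕ) (hm : 2 ≤ m) (x : ℝ)
    (hx : |x| ≤ ((m : ℝ) - 1) ^ (m - 1) / (m : ℝ) ^ m) :
    (1 / 2 < FC m x ∧ FC m x ≤ (m : ℝ) / ((m : ℝ) - 1)) ∧
      FC m x = 1 + x * FC m x ^ m := by
  obtain ⟨k, rfl⟩ : ∃ k, m = k + 1 := ⟨m - 1, by omega⟩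
  have hk : (1 : ℝ) ≤ k := by exact_mod_cast (by omega : 1 ≤ k)
  have hk0 : (0 : ℝ) < k := by linarith
  have hFC : FC (k + 1) x = ∑' n, fussCoeff k n * x ^ n := by
    simp [FC, fussCoeff]
  rw [hFC]
  simp only [Nat.cast_add, Nat.cast_one, add_sub_cancel_right, add_tsub_cancel_right] at hx ⊢
  set B : ℝ := ((k : ℝ) + 1) / k with hB
  have hB1 : B = 1 + 1 / k := by rw [hB]; field_simp
  have hrB : (k : ℝ) ^ k / ((k : ℝ) + 1) ^ (k + 1) * B ^ (k + 1) = 1 / k := by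
    rw [hB, div_pow]; field_simp; ring
  have hB0 : 0 ≤ B := by positivity
  have hfix : 1 + |x| * B ^ (k + 1) ≤ B := by
    have := mul_le_mul_of_nonneg_right hx (pow_nonneg hB0 (k + 1))
    linarith
  have hpart := sum_fussCoeff_le k |x| B (abs_nonneg x) hfix hB0
  have hnn : ∀ n, 0 ≤ fussCoeff k n * |x| ^ n := fun n =>
    mul_nonneg (fussCoeff_nonneg k n) (by positivity)
  have hsabs : Summable fun n => fussCoeff k n * |x| ^ n :=
    summable_of_sum_range_le hnn hpart
  have hnorm : ∀ n, ‖fussCoeff k n * x ^ n‖ = fussCoeff k n * |x| ^ n := fun n => by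
    rw [norm_mul, norm_pow, Real.norm_of_nonneg (fussCoeff_nonneg k n), Real.norm_eq_abs]
  have hsn : Summable fun n => ‖fussCoeff k n * x ^ n‖ := by simpa only [hnorm] using hsabs
  have hs := hsn.of_norm
  have habs : ∑' n, fussCoeff k n * |x| ^ n ≤ B := hsabs.tsum_le_of_sum_range_le hpart
  have hle : ∀ n, fussCoeff k n * x ^ n ≤ fussCoeff k n * |x| ^ n := fun n =>
    (le_abs_self _).trans_eq (hnorm n)
  have hup : ∑' n, fussCoeff k n * x ^ n ≤ B := (hs.tsum_le_tsum hle hsabs).trans habs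
  have heq : ∑' n, fussCoeff k n * x ^ n = 1 + x * (∑' n, fussCoeff k n * x ^ n) ^ (k + 1) := by
    have h1 := (hasSum_pow (fussSeries k) x (by simpa [fussSeries] using hsn) (k + 1)).2
    simp only [fussSeries, coeff_mk] at h1
    rw [← h1, ← tsum_mul_left, hs.tsum_eq_zero_add, fussCoeff_zero, pow_zero, mul_one]
    congr 1
    exact tsum_congr fun n => by rw [fussCoeff_succ, fussSeries]; ring
  -- The terms with `n ≥ 1` have absolute sum at most `B - 1 = 1 / k ≤ 1`.
  have hlow : 0 ≤ ∑' n, fussCoeff k n * x ^ n := by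
    rw [hsabs.tsum_eq_zero_add] at habs
    rw [hs.tsum_eq_zero_add]
    simp only [fussCoeff_zero, pow_zero, mul_one] at habs ⊢
    have h1 : -∑' n, fussCoeff k (n + 1) * |x| ^ (n + 1) ≤
        ∑' n, fussCoeff k (n + 1) * x ^ (n + 1) := by
      rw [← tsum_neg]
      refine Summable.tsum_le_tsum (fun n => ?_) ((summable_nat_add_iff 1).2 hsabs).neg
        ((summable_nat_add_iff 1).2 hs)
      rw [← hnorm, Real.norm_eq_abs]
      exact neg_abs_le _
    have : 1 / (k : ℝ) ≤ 1 := by rw [div_le_one hk0]; exact hk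
    linarith
  have hr : |x| < 1 / 2 := by
    refine hx.trans_lt ?_
    rw [div_lt_div_iff₀ (by positivity) (by norm_num), pow_succ]
    have : (k : ℝ) ^ k < ((k : ℝ) + 1) ^ k :=
      pow_lt_pow_left₀ (by linarith) hk0.le (by omega)
    have h2 : ((k : ℝ) + 1) ^ k * 2 ≤ ((k : ℝ) + 1) ^ k * (k + 1) := by gcongr; linarith
    linarith
  refine ⟨⟨?_, hup⟩, heq⟩
  generalize ∑' n, fussCoeff k n * x ^ n = G at *
  have hG : 0 ≤ G ^ (k + 1) := by positivity
  rcases le_or_gt 0 x with h | h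
  · have := mul_nonneg h hG
    linarith
  · have hG1 : G ≤ 1 := by
      have := mul_nonpos_of_nonpos_of_nonneg h.le hG
      linarith
    have h1 : G ^ (k + 1) ≤ 1 := pow_le_one₀ hlow hG1
    rw [abs_of_neg h] at hr
    nlinarith
end

section
/- For every real number x with |x| ≤ 1, 2·Li₂((1−√(1−x))/2) + 2·Li₂((√(1−x)−1)/(√(1−x)+1)) + log²((1+√(1−x))/2) = 0, where √ denotes the principal square root. -/
/-- The power series `∑ z ^ n / (n + 1)` of the derivative of `Li2`. -/
noncomputable def Li2Deriv (z : ℝ) : ℝ := ∑' n : ℕ, z ^ n / ((n : ℝ) + 1)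

lemma summable_inv_succ_sq : Summable fun n : ℕ => 1 / ((n : ℝ) + 1) ^ 2 := by
  have h := (summable_nat_add_iff 1).mpr (Real.summable_one_div_nat_pow.mpr one_lt_two)
  simpa using h

lemma continuousOn_Li2 : ContinuousOn Li2 (Set.Icc (-1) 1) := by
  unfold Li2
  refine continuousOn_tsum (fun n => by fun_prop) summable_inv_succ_sq ?_
  intro n y hy
  have h1 : |y| ≤ 1 := abs_le.mpr hy
  rw [Real.norm_eq_abs, abs_div, abs_pow, abs_of_nonneg (by positivity : (0 : ℝ) ≤ ((n : ℝ) + 1) ^ 2)]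
  gcongr
  exact pow_le_one₀ (abs_nonneg _) h1

lemma Li2_zero : Li2 0 = 0 := by simp [Li2]

lemma Li2Deriv_zero : Li2Deriv 0 = 1 := by
  unfold Li2Deriv
  rw [tsum_eq_single 0]
  · simp
  · intro n hn
    simp [hn]

lemma mul_Li2Deriv {z : ℝ} (hz : |z| < 1) : z * Li2Deriv z = -Real.log (1 - z) := by
  rw [← (Real.hasSum_pow_div_log_of_abs_lt_one hz).tsum_eq, Li2Deriv, ← tsum_mul_left]
  exact tsum_congr fun n => by ring

lemma hasDerivAt_Li2 {z : ℝ} (hz : |z| < 1) : HasDerivAt Li2 (Li2Deriv z) z := by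
  obtain ⟨r, hzr, hr⟩ := exists_between hz
  have hr0 : 0 ≤ r := (abs_nonneg z).trans hzr.le
  -- On the ball of radius `r < 1` the differentiated series is dominated by the geometric one.
  refine hasDerivAt_tsum_of_isPreconnected (t := Metric.ball (0 : ℝ) r) (y₀ := 0) (y := z)
    (g := fun (n : ℕ) y => y ^ (n + 1) / ((n : ℝ) + 1) ^ 2)
    (g' := fun (n : ℕ) y => y ^ n / ((n : ℝ) + 1))
    (summable_geometric_of_lt_one hr0 hr) Metric.isOpen_ball
    (convex_ball _ _).isPreconnected ?_ ?_ ?_ ?_ ?_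
  · intro n y _
    have h := (hasDerivAt_pow (n + 1) y).div_const (((n : ℝ) + 1) ^ 2)
    refine h.congr_deriv ?_
    have : (n : ℝ) + 1 ≠ 0 := by positivity
    push_cast
    field_simp
  · intro n y hy
    have hy' : |y| ≤ r := by
      rw [mem_ball_zero_iff] at hy
      exact hy.le
    rw [Real.norm_eq_abs, abs_div, abs_pow, abs_of_nonneg (by positivity : (0 : ℝ) ≤ (n : ℝ) + 1)]
    calc |y| ^ n / ((n : ℝ) + 1) ≤ |y| ^ n :=
          div_le_self (by positivity) (by linarith [(Nat.cast_nonneg n : (0 : ℝ) ≤ n)])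
      _ ≤ r ^ n := by gcongr
  · simpa using (abs_nonneg z).trans_lt hzr
  · simp
  · simpa using hzr

/-- The left-hand side of Landen's identity. -/
noncomputable def landen (z : ℝ) : ℝ :=
  Li2 z + Li2 (-z / (1 - z)) + Real.log (1 - z) ^ 2 / 2

lemma continuousOn_landen : ContinuousOn landen (Set.Icc (-1 / 2) (1 / 2)) := by
  have hne : ∀ z ∈ Set.Icc (-1 / 2 : ℝ) (1 / 2), 1 - z ≠ 0 := fun z hz => by
    have := hz.2
    linarith
  unfold landen
  refine ((continuousOn_Li2.mono ?_).add (continuousOn_Li2.comp ?_ ?_)).add ?_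
  · exact Set.Icc_subset_Icc (by norm_num) (by norm_num)
  · exact ContinuousOn.div (by fun_prop) (by fun_prop) hne
  · intro z hz
    obtain ⟨h1, h2⟩ := hz
    have h : 0 < 1 - z := by linarith
    constructor
    · rw [le_div_iff₀ h]
      linarith
    · rw [div_le_iff₀ h]
      linarith
  · exact ((ContinuousOn.log (by fun_prop) hne).pow 2).div_const 2

lemma hasDerivAt_landen {z : ℝ} (h1 : -1 / 2 ≤ z) (h2 : z < 1 / 2) : HasDerivAt landen 0 z := by
  have h : 0 < 1 - z := by linarith
  have hz : |z| < 1 := abs_lt.mpr ⟨by linarith, by linarith⟩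
  have hw : |-z / (1 - z)| < 1 := by
    rw [abs_lt, lt_div_iff₀ h, div_lt_iff₀ h]
    constructor <;> linarith
  have hsub : HasDerivAt (fun z : ℝ => 1 - z) (-1) z := (hasDerivAt_id z).const_sub 1
  have hq : HasDerivAt (fun z : ℝ => -z / (1 - z)) (-1 / (1 - z) ^ 2) z := by
    refine ((hasDerivAt_id z).neg.div hsub h.ne').congr_deriv ?_
    simp only [Pi.neg_apply, id]
    ring
  have hA := hasDerivAt_Li2 hz
  have hB := (hasDerivAt_Li2 hw).comp z hq
  have hC := ((hsub.log h.ne').pow 2).div_const 2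
  refine ((hA.add hB).add hC).congr_deriv ?_
  rcases eq_or_ne z 0 with rfl | hz0
  · simp [Li2Deriv_zero]
  · have eA := mul_Li2Deriv hz
    have eB := mul_Li2Deriv hw
    have hlog : Real.log (1 - -z / (1 - z)) = -Real.log (1 - z) := by
      rw [← Real.log_inv]
      congr 1
      field_simp
      ring
    rw [hlog, neg_neg] at eB
    have eA' : Li2Deriv z = -Real.log (1 - z) / z := by
      rw [eq_div_iff hz0, mul_comm, eA]
    have eB' : Li2Deriv (-z / (1 - z)) = -Real.log (1 - z) * (1 - z) / z := by
      rw [eq_div_iff hz0, ← eB]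
      field_simp
    rw [eA', eB']
    field_simp
    ring

lemma landen_eq_zero {z : ℝ} (hz : z ∈ Set.Icc (-1 / 2 : ℝ) (1 / 2)) : landen z = 0 := by
  have key := constant_of_has_deriv_right_zero continuousOn_landen
    fun y hy => (hasDerivAt_landen hy.1 hy.2).hasDerivWithinAt
  rw [key z hz, ← key 0 ⟨by norm_num, by norm_num⟩]
  simp [landen, Li2_zero]

theorem stmt19 (x : ℝ) (hx : |x| ≤ 1) :
    2 * Li2 ((1 - Real.sqrt (1 - x)) / 2) +
        2 * Li2 ((Real.sqrt (1 - x) - 1) / (Real.sqrt (1 - x) + 1)) +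
        (Real.log ((1 + Real.sqrt (1 - x)) / 2)) ^ 2 = 0 := by
  have hs0 := Real.sqrt_nonneg (1 - x)
  have hs2 : Real.sqrt (1 - x) ≤ 2 := by
    rw [Real.sqrt_le_left (by norm_num)]
    linarith [(abs_le.mp hx).1]
  set s := Real.sqrt (1 - x)
  have h := landen_eq_zero (z := (1 - s) / 2) ⟨by linarith, by linarith⟩
  have e1 : 1 - (1 - s) / 2 = (1 + s) / 2 := by ring
  have e2 : -((1 - s) / 2) / ((1 + s) / 2) = (s - 1) / (s + 1) := by
    have : s + 1 ≠ 0 := by positivity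
    have : 1 + s ≠ 0 := by positivity
    field_simp
    ring
  rw [landen, e1, e2] at h
  linarith
end
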